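/- arXiv:1702.00136 — 2 statements merged into one kernel-verified Lean document; each statement's English description precedes it below -/
import Mathlib

section
/- Assume the energy functional E satisfies conditions (E1), (E2) and (E3). Then for every initial datum u₀ ∈ X that is stable at t = 0, i.e. E(0,u₀) ≤ E(0,v) + d(u₀,v) for every v ∈ X, there exists at least one Energetic solution u of the rate-independent system (X,E,d) with u(0) = u₀. -/
open Filter MeasureTheory Topology Set
open scoped ENNReal

noncomputable section

variable {X : Type*} [MetricSpace X]

/-- Pointwise total variation of `u : ℝ → X` on a set `S ⊆ ℝ` (with value in `ℝ≥0∞`),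
defined as the supremum over finite increasing families of points of `S` of the sums of the
consecutive distances. -/
def varD (u : ℝ → X) (S : Set ℝ) : ℝ≥0∞ :=
  ⨆ (M : ℕ) (t : ℕ → ℝ)
    (_ : (∀ j, j ≤ M → t j ∈ S) ∧ ∀ j, j < M → t j < t (j + 1)),
    ∑ j ∈ Finset.range M, edist (u (t j)) (u (t (j + 1)))

/-- Left limit of `u` at `t`, with the convention that it equals `u 0` for `t ≤ 0`
(curves are thought of as being defined on `[0,T]`). -/
def lLim (u : ℝ → X) (t : ℝ) : X :=
  if t ≤ 0 then u 0 else Function.leftLim u t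

/-- Right limit of `u : [0,T] → X` at `t`, with the convention that it equals `u T` for
`t ≥ T`. -/
def rLim (u : ℝ → X) (T t : ℝ) : X :=
  if T ≤ t then u T else Function.rightLim u t

/-- The jump set of a curve `u : [0,T] → X`. -/
def jumpSet (u : ℝ → X) (T : ℝ) : Set ℝ :=
  {t | t ∈ Icc 0 T ∧ (lLim u t ≠ u t ∨ rLim u T t ≠ u t)}

/-- The metric slope `|DE|(t,u)` of the energy functional `E`. -/
def slopeE (E : ℝ → X → ℝ) (t : ℝ) (u : X) : ℝ≥0∞ :=
  Filter.limsup (fun v => ENNReal.ofReal ((E t u - E t v) / dist u v)) (𝓝[≠] u)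

/-- The metric derivative of a curve `θ : ℝ → X` (via `limUnder`: it coincides with the
metric derivative at every point where the latter exists). -/
def mder (θ : ℝ → X) (r : ℝ) : ℝ :=
  limUnder (𝓝[≠] r) fun s => dist (θ s) (θ r) / |s - r|

/-- `θ` is absolutely continuous on `[a,b]`. -/
def IsAC (θ : ℝ → X) (a b : ℝ) : Prop :=
  ∃ m : ℝ → ℝ, IntegrableOn m (Icc a b) ∧
    ∀ s t : ℝ, a ≤ s → s ≤ t → t ≤ b → dist (θ s) (θ t) ≤ ∫ r in s..t, m r

/-- The viscous jump dissipation cost `v(t,u₋,u₊)`. -/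
def vCost (E : ℝ → X → ℝ) (t : ℝ) (um up : X) : ℝ≥0∞ :=
  ⨅ (r₀ : ℝ) (r₁ : ℝ) (θ : ℝ → X)
    (_ : r₀ ≤ r₁ ∧ IsAC θ r₀ r₁ ∧ θ r₀ = um ∧ θ r₁ = up),
    ∫⁻ r in Ioc r₀ r₁, ENNReal.ofReal (mder θ r) * max (slopeE E t (θ r)) 1

/-- The viscously corrected distance `D_μ(x,y) = d(x,y) + (μ/2) d(x,y)²`. -/
def Dmu (μ : ℝ) (x y : X) : ℝ := dist x y + μ / 2 * dist x y ^ 2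

/-- The residual stability function `R_μ(t,x) = sup_y (E(t,x) − E(t,y) − D_μ(x,y))`. -/
def Rmu (E : ℝ → X → ℝ) (μ t : ℝ) (x : X) : ℝ≥0∞ :=
  ⨆ y : X, ENNReal.ofReal (E t x - E t y - Dmu μ x y)

/-- The holes of a compact set `K ⊆ ℝ` (connected components of `[inf K, sup K] ∖ K`),
identified with the pairs of their endpoints. -/
def holes (K : Set ℝ) : Set (ℝ × ℝ) :=
  {p | p.1 ∈ K ∧ p.2 ∈ K ∧ p.1 < p.2 ∧ Ioo p.1 p.2 ∩ K = ∅}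

/-- The visco-energetic transition cost `Trc_μ(t,θ,K)`. -/
def trCost (E : ℝ → X → ℝ) (μ t : ℝ) (θ : ℝ → X) (K : Set ℝ) : ℝ≥0∞ :=
  varD θ K
    + (∑' p : ↥(holes K),
        ENNReal.ofReal (μ / 2 * dist (θ (p : ℝ × ℝ).1) (θ (p : ℝ × ℝ).2) ^ 2))
    + ∑' s : ↥(K \ {sSup K}), Rmu E μ t (θ (s : ℝ))

/-- The visco-energetic jump dissipation cost `c_μ(t,u₋,u₊)`. -/
def veCost (E : ℝ → X → ℝ) (μ : ℝ) (t : ℝ) (um up : X) : ℝ≥0∞ :=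
  ⨅ (K : Set ℝ) (θ : ℝ → X)
    (_ : K.Nonempty ∧ IsCompact K ∧ ContinuousOn θ K ∧ θ (sInf K) = um ∧ θ (sSup K) = up),
    trCost E μ t θ K

/-- The jump contribution `Jmp_{Δ_e}(u;[t₀,t₁])` of the incremental cost associated with a
jump dissipation cost `e`. -/
def jmpVar (e : ℝ → X → X → ℝ≥0∞) (u : ℝ → X) (T t₀ t₁ : ℝ) : ℝ≥0∞ :=
  (e t₀ (u t₀) (rLim u T t₀) - edist (u t₀) (rLim u T t₀))
    + (e t₁ (lLim u t₁) (u t₁) - edist (lLim u t₁) (u t₁))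
    + ∑' t : ↥(jumpSet u T ∩ Ioo t₀ t₁),
        ((e (t : ℝ) (lLim u (t : ℝ)) (u (t : ℝ)) - edist (lLim u (t : ℝ)) (u (t : ℝ)))
          + (e (t : ℝ) (u (t : ℝ)) (rLim u T (t : ℝ))
              - edist (u (t : ℝ)) (rLim u T (t : ℝ))))

/-- The augmented total variation `Var_{d,e}(u;[t₀,t₁])`. -/
def varAug (e : ℝ → X → X → ℝ≥0∞) (u : ℝ → X) (T t₀ t₁ : ℝ) : ℝ≥0∞ :=
  varD u (Icc t₀ t₁) + jmpVar e u T t₀ t₁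

/-- Condition (E1): lower semicontinuity and compactness of the sublevel sets of the
perturbed functional `F(t,u) = E(t,u) + d(x₀,u)` on `[0,T] × X`. -/
def CondE1 (E : ℝ → X → ℝ) (T : ℝ) (x₀ : X) : Prop :=
  ∀ C : ℝ,
    LowerSemicontinuousOn (fun p : ℝ × X => E p.1 p.2)
      {p : ℝ × X | p.1 ∈ Icc 0 T ∧ E p.1 p.2 + dist x₀ p.2 ≤ C} ∧
    IsCompact {p : ℝ × X | p.1 ∈ Icc 0 T ∧ E p.1 p.2 + dist x₀ p.2 ≤ C}

/-- Condition (E2): power control for the power functional `P`, with constant `CP`. -/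
def CondE2 (E P : ℝ → X → ℝ) (T : ℝ) (x₀ : X) (CP : ℝ) : Prop :=
  0 < CP ∧
    ∀ t ∈ Icc (0 : ℝ) T, ∀ u : X,
      (P t u : EReal) ≤
          Filter.liminf (fun s => (((E t u - E s u) / (t - s) : ℝ) : EReal)) (𝓝[Ico 0 t] t) ∧
        Filter.limsup (fun s => (((E s u - E t u) / (s - t) : ℝ) : EReal)) (𝓝[Ioc t T] t) ≤
          (P t u : EReal) ∧
        |P t u| ≤ CP * (E t u + dist x₀ u)

/-- Condition (E3): conditional upper semicontinuity of the power. -/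
def CondE3 (E P : ℝ → X → ℝ) (T : ℝ) : Prop :=
  ∀ (tn : ℕ → ℝ) (un : ℕ → X) (t : ℝ) (u : X),
    (∀ n, tn n ∈ Icc (0 : ℝ) T) → t ∈ Icc (0 : ℝ) T →
    Tendsto tn atTop (𝓝 t) → Tendsto un atTop (𝓝 u) →
    Tendsto (fun n => E (tn n) (un n)) atTop (𝓝 (E t u)) →
    Filter.limsup (fun n => ((P (tn n) (un n) : ℝ) : EReal)) atTop ≤ (P t u : EReal)

/-- Condition (E3'): upper semicontinuity of the power and lower semicontinuity of the slope
along sequences with bounded energy and slope. -/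
def CondE3' (E P : ℝ → X → ℝ) (T : ℝ) (x₀ : X) : Prop :=
  ∀ (tn : ℕ → ℝ) (un : ℕ → X) (t : ℝ) (u : X),
    (∀ n, tn n ∈ Icc (0 : ℝ) T) → t ∈ Icc (0 : ℝ) T →
    Tendsto tn atTop (𝓝 t) → Tendsto un atTop (𝓝 u) →
    (∃ C : ℝ, ∀ n, E 0 (un n) + dist x₀ (un n) ≤ C) →
    (∃ S : ℝ≥0∞, S ≠ ⊤ ∧ ∀ n, slopeE E (tn n) (un n) ≤ S) →
    slopeE E t u ≤ Filter.liminf (fun n => slopeE E (tn n) (un n)) atTop ∧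
      Filter.limsup (fun n => ((P (tn n) (un n) : ℝ) : EReal)) atTop ≤ (P t u : EReal)

/-- Condition (E4): the chain-rule inequality. -/
def CondE4 (E P : ℝ → X → ℝ) (T : ℝ) : Prop :=
  ∀ u : ℝ → X, IsAC u 0 T →
    IsAC (fun t => E t (u t)) 0 T ∧
      ∀ᵐ t ∂(volume.restrict (Ioo (0 : ℝ) T)),
        DifferentiableAt ℝ (fun s => E s (u s)) t ∧
          ENNReal.ofReal (P t (u t) - deriv (fun s => E s (u s)) t) ≤
            ENNReal.ofReal (mder u t) * slopeE E t (u t)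

/-- Energetic solution of the rate-independent system `(X,E,d)`. -/
def IsEnergeticSol (E P : ℝ → X → ℝ) (T : ℝ) (u : ℝ → X) : Prop :=
  varD u (Icc 0 T) ≠ ⊤ ∧
    ∀ t ∈ Icc (0 : ℝ) T,
      (∀ v : X, E t (u t) ≤ E t v + dist (u t) v) ∧
        E t (u t) + (varD u (Icc 0 t)).toReal =
          E 0 (u 0) + ∫ s in (0 : ℝ)..t, P s (u s)

/-- Balanced Viscosity solution of the rate-independent system `(X,E,d)`. -/
def IsBVSol (E P : ℝ → X → ℝ) (T : ℝ) (u : ℝ → X) : Prop :=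
  varD u (Icc 0 T) ≠ ⊤ ∧
    (∀ t ∈ Icc (0 : ℝ) T \ jumpSet u T, slopeE E t (u t) ≤ 1) ∧
    ∀ t ∈ Icc (0 : ℝ) T,
      varAug (vCost E) u T 0 t ≠ ⊤ ∧
        E t (u t) + (varAug (vCost E) u T 0 t).toReal =
          E 0 (u 0) + ∫ s in (0 : ℝ)..t, P s (u s)

/-- μ-Visco-Energetic solution of the rate-independent system `(X,E,d)`. -/
def IsVESol (E P : ℝ → X → ℝ) (T μ : ℝ) (u : ℝ → X) : Prop :=
  varD u (Icc 0 T) ≠ ⊤ ∧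
    (∀ t ∈ Icc (0 : ℝ) T \ jumpSet u T, ∀ v : X, E t (u t) ≤ E t v + Dmu μ (u t) v) ∧
    ∀ t ∈ Icc (0 : ℝ) T,
      varAug (veCost E μ) u T 0 t ≠ ⊤ ∧
        E t (u t) + (varAug (veCost E μ) u T 0 t).toReal =
          E 0 (u 0) + ∫ s in (0 : ℝ)..t, P s (u s)


section Aux

variable {E P : ℝ → X → ℝ} {T CP : ℝ} {x₀ : X}

lemma es_varD_eq (u : ℝ → X) (S : Set ℝ) : varD u S = eVariationOn u S := by
  apply le_antisymm
  · refine iSup_le fun M => iSup_le fun t => iSup_le fun h => ?_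
    have hmono : MonotoneOn t (Iic M) := by
      intro a _ b hb hab
      have hb' : b ≤ M := hb
      clear hb
      induction b, hab using Nat.le_induction with
      | base => exact le_rfl
      | succ n hn ih => exact (ih (by omega)).trans (h.2 n (by omega)).le
    have := eVariationOn.sum_le_of_monotoneOn_Iic (f := u) (s := S) (n := M) (u := t) hmono
      (fun i hi => h.1 i hi)
    simpa [edist_comm] using this
  · refine iSup_le fun p => ?_
    obtain ⟨n, p, hp, hpS⟩ := p
    have key : ∀ n : ℕ, ∃ (M : ℕ) (t : ℕ → ℝ),
        ((∀ j, j ≤ M → t j ∈ S) ∧ ∀ j, j < M → t j < t (j + 1)) ∧ t M = p n ∧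
        ∑ i ∈ Finset.range n, edist (u (p (i + 1))) (u (p i)) =
          ∑ j ∈ Finset.range M, edist (u (t j)) (u (t (j + 1))) := by
      intro n
      induction n with
      | zero => exact ⟨0, fun _ => p 0, ⟨fun j _ => hpS 0, by simp⟩, rfl, by simp⟩
      | succ n ih =>
        obtain ⟨M, t, ⟨h1, h2⟩, h3, h4⟩ := ih
        rcases (hp (Nat.le_succ n)).eq_or_lt with heq | hlt
        · refine ⟨M, t, ⟨h1, h2⟩, by rw [h3, heq], ?_⟩
          rw [Finset.sum_range_succ, h4]
          simp only [Nat.succ_eq_add_one] at heq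
          simp [heq]
        · refine ⟨M + 1, fun j => if j ≤ M then t j else p (n + 1), ⟨?_, ?_⟩, ?_, ?_⟩
          · intro j hj
            dsimp only
            split_ifs with hjM
            · exact h1 j hjM
            · exact hpS _
          · intro j hj
            have hjM : j ≤ M := by omega
            rcases hjM.eq_or_lt with rfl | hlt'
            · simpa [h3] using hlt
            · have : j + 1 ≤ M := hlt'
              simp [hjM, this, h2 j hlt']
          · simp
          · rw [Finset.sum_range_succ, h4, Finset.sum_range_succ]
            congr 1
            · refine Finset.sum_congr rfl fun j hj => ?_
              have hj' := Finset.mem_range.1 hj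
              have h5 : j ≤ M := by omega
              have h6 : j + 1 ≤ M := by omega
              simp [h5, h6]
            · simp [h3, edist_comm]
    obtain ⟨M, t, h1, _, h3⟩ := key n
    show ∑ i ∈ Finset.range n, edist (u (p (i + 1))) (u (p i)) ≤ _
    rw [h3]
    exact le_iSup_of_le M (le_iSup_of_le t (le_iSup_of_le h1 le_rfl))

lemma es_right (h : CondE2 E P T x₀ CP) {t : ℝ} (ht : t ∈ Icc 0 T) (v : X) {r : ℝ}
    (hr : P t v < r) : ∀ᶠ z in 𝓝[Ioc t T] t, E z v - E t v < r * (z - t) := by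
  have h1 := (h.2 t ht v).2.1
  have h2 := eventually_lt_of_limsup_lt (h1.trans_lt (EReal.coe_lt_coe_iff.2 hr))
  filter_upwards [h2, self_mem_nhdsWithin] with z hz hz'
  have := EReal.coe_lt_coe_iff.1 hz
  rwa [div_lt_iff₀ (by linarith [hz'.1])] at this

lemma es_left (h : CondE2 E P T x₀ CP) {t : ℝ} (ht : t ∈ Icc 0 T) (v : X) {r : ℝ}
    (hr : r < P t v) : ∀ᶠ z in 𝓝[Ico 0 t] t, r * (t - z) < E t v - E z v := by
  have h1 := (h.2 t ht v).1
  have h2 := eventually_lt_of_lt_liminf ((EReal.coe_lt_coe_iff.2 hr).trans_le h1)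
  filter_upwards [h2, self_mem_nhdsWithin] with z hz hz'
  have := EReal.coe_lt_coe_iff.1 hz
  rwa [lt_div_iff₀ (by linarith [hz'.2])] at this

lemma es_F_nonneg (h : CondE2 E P T x₀ CP) {t : ℝ} (ht : t ∈ Icc 0 T) (v : X) :
    0 ≤ E t v + dist x₀ v := by
  have h1 := (h.2 t ht v).2.2
  have h2 := (abs_nonneg _).trans h1
  exact nonneg_of_mul_nonneg_right h2 h.1

lemma es_cont (h1 : CondE1 E T x₀) (h : CondE2 E P T x₀ CP) (v : X) :
    ContinuousOn (fun t => E t v) (Icc 0 T) := by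
  intro t ht
  refine tendsto_order.2 ⟨fun y hy => ?_, fun y hy => ?_⟩
  · have hc := (h1 (y + dist x₀ v)).2.isClosed
    have hmem : ((t, v) : ℝ × X) ∈
        {p : ℝ × X | p.1 ∈ Icc 0 T ∧ E p.1 p.2 + dist x₀ p.2 ≤ y + dist x₀ v}ᶜ := by
      simp only [mem_compl_iff, mem_ofPred_eq, not_and]
      intro _
      linarith
    have h2 := hc.isOpen_compl.mem_nhds hmem
    have h3 : Tendsto (fun s : ℝ => (s, v)) (𝓝[Icc 0 T] t) (𝓝 (t, v)) :=
      ((continuous_id.prodMk continuous_const).tendsto t).mono_left nhdsWithin_le_nhds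
    filter_upwards [h3 h2, self_mem_nhdsWithin] with s hs hs'
    simp only [mem_preimage, mem_compl_iff, mem_ofPred_eq, not_and] at hs
    have := hs hs'
    linarith
  · have hsub : Icc 0 T ⊆ (Ico 0 t ∪ {t}) ∪ Ioc t T := by
      intro s hs
      rcases lt_trichotomy s t with h | h | h
      · exact Or.inl (Or.inl ⟨hs.1, h⟩)
      · exact Or.inl (Or.inr h)
      · exact Or.inr ⟨h, hs.2⟩
    refine Filter.Eventually.filter_mono (nhdsWithin_mono t hsub) ?_
    rw [nhdsWithin_union, nhdsWithin_union, eventually_sup, eventually_sup]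
    refine ⟨⟨?_, ?_⟩, ?_⟩
    · have h4 : Tendsto (fun s : ℝ => E t v - (P t v - 1) * (t - s)) (𝓝[Ico 0 t] t) (𝓝 (E t v)) := by
        have : Continuous (fun s : ℝ => E t v - (P t v - 1) * (t - s)) := by fun_prop
        have := this.tendsto t
        simp only [sub_self, mul_zero, sub_zero] at this
        exact this.mono_left nhdsWithin_le_nhds
      filter_upwards [es_left h ht v (sub_one_lt (P t v)), (tendsto_order.1 h4).2 y hy] with s h5 h6
      linarith
    · simpa using hy
    · have h4 : Tendsto (fun s : ℝ => E t v + (P t v + 1) * (s - t)) (𝓝[Ioc t T] t) (𝓝 (E t v)) := by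
        have : Continuous (fun s : ℝ => E t v + (P t v + 1) * (s - t)) := by fun_prop
        have := this.tendsto t
        simp only [sub_self, mul_zero, add_zero] at this
        exact this.mono_left nhdsWithin_le_nhds
      filter_upwards [es_right h ht v (lt_add_one (P t v)), (tendsto_order.1 h4).2 y hy] with s h5 h6
      linarith

/-- forward growth lemma -/
lemma es_fwd (h1 : CondE1 E T x₀) (h : CondE2 E P T x₀ CP) (v : X) {a b : ℝ} (ha : 0 ≤ a)
    (hab : a ≤ b) (hb : b ≤ T) (c K ε : ℝ)
    (hbd : ∀ r ∈ Ico a b, P r v ≤ K * (E r v + c) + ε) :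
    E b v + c ≤ gronwallBound (E a v + c) K ε (b - a) := by
  refine le_gronwallBound_of_liminf_deriv_right_le (f := fun t => E t v + c)
    (f' := fun t => P t v) (a := a) (b := b) ?_ ?_ le_rfl hbd b ⟨hab, le_rfl⟩
  · exact ((es_cont h1 h v).mono (Icc_subset_Icc ha hb)).add continuousOn_const
  · intro x hx r hr
    have h2 := es_right h (t := x) ⟨ha.trans hx.1, hx.2.le.trans hb⟩ v hr
    rw [nhdsWithin_Ioc_eq_nhdsGT (hx.2.trans_le hb)] at h2
    refine Filter.Eventually.frequently ?_
    filter_upwards [h2, self_mem_nhdsWithin] with z hz hz'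
    have hz'' : 0 < z - x := sub_pos.2 hz'
    rw [inv_mul_lt_iff₀ hz'']
    linarith

/-- backward growth lemma -/
lemma es_bwd (h1 : CondE1 E T x₀) (h : CondE2 E P T x₀ CP) (v : X) {a b : ℝ} (ha : 0 ≤ a)
    (hab : a ≤ b) (hb : b ≤ T) (c K ε : ℝ)
    (hbd : ∀ r ∈ Ioc a b, -P r v ≤ K * (E r v + c) + ε) :
    E a v + c ≤ gronwallBound (E b v + c) K ε (b - a) := by
  have := le_gronwallBound_of_liminf_deriv_right_le (f := fun t => E (-t) v + c)
    (f' := fun t => -P (-t) v) (a := -b) (b := -a) (δ := E b v + c) (K := K) (ε := ε)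
    ?_ ?_ (by simp) ?_ (-a) ⟨by linarith, le_rfl⟩
  · simpa [sub_eq_add_neg, add_comm] using this
  · refine ContinuousOn.add ?_ continuousOn_const
    refine ((es_cont h1 h v).mono (Icc_subset_Icc ha hb)).comp continuous_neg.continuousOn ?_
    intro x hx
    exact ⟨by linarith [hx.2], by linarith [hx.1]⟩
  · intro x hx r hr
    have hx0 : 0 < -x := by linarith [hx.2]
    have h2 := es_left h (t := -x) (r := -r) ⟨hx0.le, by linarith [hx.1]⟩ v (by linarith)
    rw [nhdsWithin_Ico_eq_nhdsLT hx0] at h2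
    have h3 : Tendsto (fun z : ℝ => -z) (𝓝[>] x) (𝓝[<] (-x)) := tendsto_neg_nhdsGT
    refine Filter.Eventually.frequently ?_
    filter_upwards [h3.eventually h2, self_mem_nhdsWithin] with z hz hz'
    have hz'' : 0 < z - x := sub_pos.2 hz'
    rw [inv_mul_lt_iff₀ hz'']
    linarith
  · intro x hx
    exact hbd (-x) ⟨by linarith [hx.2], by linarith [hx.1]⟩

lemma es_fwd_exp (h1 : CondE1 E T x₀) (h : CondE2 E P T x₀ CP) (v : X) {a b : ℝ} (ha : 0 ≤ a)
    (hab : a ≤ b) (hb : b ≤ T) :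
    E b v + dist x₀ v ≤ (E a v + dist x₀ v) * Real.exp (CP * (b - a)) := by
  rw [← gronwallBound_ε0]
  refine es_fwd h1 h v ha hab hb _ _ _ fun r hr => ?_
  have := (h.2 r ⟨ha.trans hr.1, hr.2.le.trans hb⟩ v).2.2
  linarith [le_abs_self (P r v)]

lemma es_bwd_exp (h1 : CondE1 E T x₀) (h : CondE2 E P T x₀ CP) (v : X) {a b : ℝ} (ha : 0 ≤ a)
    (hab : a ≤ b) (hb : b ≤ T) :
    E a v + dist x₀ v ≤ (E b v + dist x₀ v) * Real.exp (CP * (b - a)) := by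
  rw [← gronwallBound_ε0]
  refine es_bwd h1 h v ha hab hb _ _ _ fun r hr => ?_
  have := (h.2 r ⟨ha.trans hr.1.le, hr.2.trans hb⟩ v).2.2
  linarith [neg_abs_le (P r v)]

lemma es_two_exp (h1 : CondE1 E T x₀) (h : CondE2 E P T x₀ CP) (v : X) {a b : ℝ}
    (ha : a ∈ Icc 0 T) (hb : b ∈ Icc 0 T) :
    E b v + dist x₀ v ≤ (E a v + dist x₀ v) * Real.exp (CP * T) := by
  have h0 := es_F_nonneg h ha v
  have hC := h.1
  rcases le_total a b with hab | hab
  · refine (es_fwd_exp h1 h v ha.1 hab hb.2).trans ?_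
    gcongr
    linarith [ha.1, hb.2]
  · refine (es_bwd_exp h1 h v hb.1 hab ha.2).trans ?_
    gcongr
    linarith [hb.1, ha.2]

lemma es_incr (h1 : CondE1 E T x₀) (h : CondE2 E P T x₀ CP) (v : X) {a b : ℝ} (ha : 0 ≤ a)
    (hab : a ≤ b) (hb : b ≤ T) (M : ℝ) (hbd : ∀ r ∈ Ico a b, P r v ≤ M) :
    E b v - E a v ≤ M * (b - a) := by
  have := es_fwd h1 h v ha hab hb 0 0 M (by simpa using hbd)
  simp only [gronwallBound_K0] at this
  linarith

/-- the Lipschitz estimate in time on energy-bounded states -/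
lemma es_lip (h1 : CondE1 E T x₀) (h : CondE2 E P T x₀ CP) (v : X) {B : ℝ}
    (hB : ∀ r ∈ Icc 0 T, E r v + dist x₀ v ≤ B) {a b : ℝ} (ha : a ∈ Icc 0 T) (hb : b ∈ Icc 0 T) :
    |E b v - E a v| ≤ CP * B * |b - a| := by
  have hP : ∀ r ∈ Icc 0 T, |P r v| ≤ CP * B := fun r hr =>
    (h.2 r hr v).2.2.trans (mul_le_mul_of_nonneg_left (hB r hr) h.1.le)
  have main : ∀ a ∈ Icc 0 T, ∀ b ∈ Icc 0 T, a ≤ b → |E b v - E a v| ≤ CP * B * (b - a) := by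
    intro a ha b hb hab
    have h3 := es_incr h1 h v ha.1 hab hb.2 (CP * B) fun r hr =>
      (le_abs_self _).trans (hP r ⟨ha.1.trans hr.1, hr.2.le.trans hb.2⟩)
    have h4 := es_bwd h1 h v ha.1 hab hb.2 0 0 (CP * B) fun r hr => by
      have := hP r ⟨ha.1.trans hr.1.le, hr.2.trans hb.2⟩
      linarith [neg_abs_le (P r v)]
    simp only [gronwallBound_K0] at h4
    rw [abs_le]
    constructor <;> linarith
  rcases le_total a b with hab | hab
  · rw [abs_of_nonneg (sub_nonneg.2 hab)]
    exact main a ha b hb hab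
  · rw [abs_sub_comm, abs_sub_comm b a, abs_of_nonneg (sub_nonneg.2 hab)]
    exact main b hb a ha hab

/-- global stability of `v` at time `t` -/
def EsStable (E : ℝ → X → ℝ) (t : ℝ) (v : X) : Prop := ∀ w : X, E t v ≤ E t w + dist v w

/-- discrete variation -/
def esVar (U : ℕ → X) (k : ℕ) : ℝ := ∑ j ∈ Finset.range k, dist (U j) (U (j + 1))

lemma es_stab_limit (h1 : CondE1 E T x₀) (h : CondE2 E P T x₀ CP) {ι : Type*} {l : Filter ι}
    [l.NeBot] {s : ι → ℝ} {w : ι → X} {B t : ℝ} {v : X} (hs : ∀ i, s i ∈ Icc 0 T)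
    (hB : ∀ i, E (s i) (w i) + dist x₀ (w i) ≤ B) (hst : ∀ i, EsStable E (s i) (w i))
    (ht : t ∈ Icc 0 T) (hst' : Tendsto s l (𝓝 t)) (hw : Tendsto w l (𝓝 v)) :
    E t v + dist x₀ v ≤ B ∧ EsStable E t v ∧
      Tendsto (fun i => E (s i) (w i)) l (𝓝 (E t v)) := by
  have hpair : Tendsto (fun i => (s i, w i)) l (𝓝 (t, v)) := hst'.prodMk_nhds hw
  obtain ⟨hlsc, hK⟩ := h1 B
  have hmem : ∀ i, (s i, w i) ∈ {p : ℝ × X | p.1 ∈ Icc 0 T ∧ E p.1 p.2 + dist x₀ p.2 ≤ B} :=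
    fun i => ⟨hs i, hB i⟩
  have hlim := hK.isClosed.mem_of_tendsto hpair (Eventually.of_forall hmem)
  have hlow : ∀ y < E t v, ∀ᶠ i in l, y < E (s i) (w i) := by
    intro y hy
    have h2 := hlsc (t, v) hlim y hy
    have h3 : Tendsto (fun i => (s i, w i)) l (𝓝[_] (t, v)) :=
      tendsto_nhdsWithin_iff.2 ⟨hpair, Eventually.of_forall hmem⟩
    exact h3.eventually h2
  have hup : ∀ z : X, Tendsto (fun i => E (s i) z + dist (w i) z) l (𝓝 (E t z + dist v z)) := by
    intro z
    have h3 : Tendsto s l (𝓝[Icc 0 T] t) :=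
      tendsto_nhdsWithin_iff.2 ⟨hst', Eventually.of_forall hs⟩
    exact ((es_cont h1 h z t ht).tendsto.comp h3).add (hw.dist tendsto_const_nhds)
  refine ⟨hlim.2, ?_, ?_⟩
  · intro z
    refine le_of_forall_lt fun y hy => ?_
    obtain ⟨y', hy1, hy2⟩ := exists_between hy
    refine hy1.trans_le (ge_of_tendsto (hup z) ?_)
    filter_upwards [hlow y' hy2] with i hi
    exact hi.le.trans (hst i z)
  · refine tendsto_order.2 ⟨hlow, fun y hy => ?_⟩
    have h3 := hup v
    rw [dist_self, add_zero] at h3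
    filter_upwards [(tendsto_order.1 h3).2 y hy] with i hi
    exact (hst i v).trans_lt hi

lemma es_usc (h1 : CondE1 E T x₀) (h : CondE2 E P T x₀ CP) (h3 : CondE3 E P T) {B t : ℝ} {v : X}
    (ht : t ∈ Icc 0 T) {ε : ℝ} (hε : 0 < ε) :
    ∃ δ > 0, ∀ s ∈ Icc 0 T, ∀ r ∈ Icc 0 T, ∀ w : X,
      (∀ r ∈ Icc 0 T, E r w + dist x₀ w ≤ B) → EsStable E s w → |s - t| < δ → |r - t| < δ →
      dist w v < δ → P r w ≤ P t v + ε := by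
  by_contra hcon
  push Not at hcon
  have hcon' := fun n : ℕ => hcon (1 / ((n : ℝ) + 1)) (by positivity)
  choose s hs r hr w hwB hst hsd hrd hwd hP using hcon'
  have hz : Tendsto (fun n : ℕ => 1 / ((n : ℝ) + 1)) atTop (𝓝 0) :=
    tendsto_one_div_add_atTop_nhds_zero_nat
  have hs' : Tendsto s atTop (𝓝 t) := by
    rw [tendsto_iff_dist_tendsto_zero]
    exact squeeze_zero (fun _ => dist_nonneg) (fun n => (hsd n).le) hz
  have hr' : Tendsto r atTop (𝓝 t) := by
    rw [tendsto_iff_dist_tendsto_zero]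
    exact squeeze_zero (fun _ => dist_nonneg) (fun n => (hrd n).le) hz
  have hw' : Tendsto w atTop (𝓝 v) := by
    rw [tendsto_iff_dist_tendsto_zero]
    exact squeeze_zero (fun _ => dist_nonneg) (fun n => (hwd n).le) hz
  obtain ⟨-, -, hE⟩ := es_stab_limit h1 h (B := B) hs (fun i => hwB i _ (hs i)) hst ht hs' hw'
  have hdiff : Tendsto (fun n => E (r n) (w n) - E (s n) (w n)) atTop (𝓝 0) := by
    refine squeeze_zero_norm (a := fun n => CP * B * |r n - s n|)
      (fun n => es_lip h1 h (w n) (hwB n) (hs n) (hr n)) ?_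
    have := ((hr'.sub hs').abs).const_mul (CP * B)
    simpa using this
  have hE' : Tendsto (fun n => E (r n) (w n)) atTop (𝓝 (E t v)) := by
    have := hdiff.add hE
    simpa using this
  have h4 := h3 r w t v hr ht hr' hw' hE'
  have h5 : ((P t v + ε : ℝ) : EReal) ≤
      Filter.limsup (fun n => ((P (r n) (w n) : ℝ) : EReal)) atTop := by
    refine le_limsup_of_frequently_le ?_ (by isBoundedDefault)
    exact (Eventually.of_forall fun n => EReal.coe_le_coe_iff.2 (hP n).le).frequently
  have := EReal.coe_le_coe_iff.1 (h5.trans h4)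
  linarith

lemma es_compact (h1 : CondE1 E T x₀) {t : ℝ} (ht : t ∈ Icc 0 T) (C : ℝ) :
    IsCompact {w : X | E t w + dist x₀ w ≤ C} := by
  have h2 : IsClosed {p : ℝ × X | p.1 = t} := isClosed_eq continuous_fst continuous_const
  have h3 := ((h1 C).2.inter_right h2).image continuous_snd
  convert h3 using 1
  ext w
  constructor
  · intro hw
    exact ⟨(t, w), ⟨⟨ht, hw⟩, rfl⟩, rfl⟩
  · rintro ⟨⟨a, b⟩, ⟨⟨_, hb⟩, ha⟩, hw⟩
    simp only [mem_ofPred_eq] at ha hb hw ⊢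
    subst ha hw
    exact hb

lemma es_min (h1 : CondE1 E T x₀) {t : ℝ} (ht : t ∈ Icc 0 T) (v : X) :
    ∃ w : X, ∀ w', E t w + dist v w ≤ E t w' + dist v w' := by
  set C := E t v + dist x₀ v with hC
  have hvK : v ∈ {w : X | E t w + dist x₀ w ≤ C} := (le_rfl : E t v + dist x₀ v ≤ C)
  have hl : LowerSemicontinuousOn (fun w => E t w + dist v w) {w : X | E t w + dist x₀ w ≤ C} := by
    refine LowerSemicontinuousOn.add ?_
      (continuous_const.dist continuous_id).continuousOn.lowerSemicontinuousOn
    intro w hw y hy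
    have h2 := (h1 C).1 (t, w) ⟨ht, hw⟩ y hy
    have h3 : Tendsto (fun z : X => (t, z)) (𝓝[{w : X | E t w + dist x₀ w ≤ C}] w)
        (𝓝[{p : ℝ × X | p.1 ∈ Icc 0 T ∧ E p.1 p.2 + dist x₀ p.2 ≤ C}] (t, w)) := by
      refine tendsto_nhdsWithin_iff.2 ⟨?_, ?_⟩
      · exact ((continuous_const.prodMk continuous_id).tendsto w).mono_left nhdsWithin_le_nhds
      · filter_upwards [self_mem_nhdsWithin] with z hz
        exact ⟨ht, hz⟩
    exact h3.eventually h2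
  obtain ⟨w, hw, hmin⟩ := hl.exists_isMinOn ⟨v, hvK⟩ (es_compact h1 ht C)
  refine ⟨w, fun w' => ?_⟩
  by_cases hw' : E t w' + dist x₀ w' ≤ C
  · exact hmin hw'
  · have h4 : E t w + dist v w ≤ E t v + dist v v := hmin hvK
    rw [dist_self] at h4
    push Not at hw'
    have := dist_triangle x₀ v w'
    linarith

lemma es_dist_le_var (U : ℕ → X) {a b : ℕ} (hab : a ≤ b) :
    dist (U a) (U b) ≤ esVar U b - esVar U a := by
  induction b, hab using Nat.le_induction with
  | base => simp
  | succ n hn ih =>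
    have := dist_triangle (U a) (U n) (U (n + 1))
    simp only [esVar, Finset.sum_range_succ] at ih ⊢
    linarith

lemma es_var_mono (U : ℕ → X) : Monotone (esVar U) :=
  monotone_nat_of_le_succ fun n => by
    simp only [esVar, Finset.sum_range_succ]
    linarith [dist_nonneg (x := U n) (y := U (n + 1))]

/-- Properties of a discrete solution. -/
structure EsDisc (E : ℝ → X → ℝ) (T : ℝ) (u₀ : X) (s : ℕ → ℝ) (U : ℕ → X) : Prop where
  mem : ∀ k, s k ∈ Icc 0 T
  mono : Monotone s
  zero : s 0 = 0
  start : U 0 = u₀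
  min : ∀ k w, E (s (k + 1)) (U (k + 1)) + dist (U k) (U (k + 1)) ≤
    E (s (k + 1)) w + dist (U k) w

lemma es_disc_exists (h1 : CondE1 E T x₀) (u₀ : X) (s : ℕ → ℝ) (hmem : ∀ k, s k ∈ Icc 0 T)
    (hmono : Monotone s) (h0 : s 0 = 0) : ∃ U, EsDisc E T u₀ s U := by
  have : ∀ k : ℕ, ∀ v : X, ∃ w : X, ∀ w', E (s k) w + dist v w ≤ E (s k) w' + dist v w' :=
    fun k v => es_min h1 (hmem k) v
  choose m hm using this
  exact ⟨fun k => Nat.rec u₀ (fun k v => m (k + 1) v) k, hmem, hmono, h0, rfl,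
    fun k w => hm _ _ _⟩

variable {u₀ : X} {s : ℕ → ℝ} {U : ℕ → X}

lemma EsDisc.stable (hd : EsDisc E T u₀ s U) (hstab : EsStable E 0 u₀) (k : ℕ) :
    EsStable E (s k) (U k) := by
  cases k with
  | zero => rw [hd.zero, hd.start]; exact hstab
  | succ k =>
    intro w
    have := hd.min k w
    have := dist_triangle (U k) (U (k + 1)) w
    linarith

lemma EsDisc.bound (h1 : CondE1 E T x₀) (h : CondE2 E P T x₀ CP) (hd : EsDisc E T u₀ s U) (k : ℕ)
    {r : ℝ} (hr : r ∈ Icc 0 T) :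
    E r (U k) + dist x₀ (U k) ≤
      (E 0 u₀ + dist x₀ u₀) * Real.exp (CP * T) * Real.exp (CP * T) := by
  have hC := h.1
  have hT : (0 : ℝ) ∈ Icc 0 T := ⟨le_rfl, hr.1.trans hr.2⟩
  have key : E (s k) (U k) + dist x₀ (U k) ≤ (E 0 u₀ + dist x₀ u₀) * Real.exp (CP * s k) := by
    induction k with
    | zero => simp [hd.zero, hd.start]
    | succ k ih =>
      have h2 := hd.min k (U k)
      rw [dist_self] at h2
      have h3 := dist_triangle x₀ (U k) (U (k + 1))
      have h4 := es_fwd_exp h1 h (U k) (hd.mem k).1 (hd.mono (Nat.le_succ k)) (hd.mem (k + 1)).2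
      have h5 : (E (s k) (U k) + dist x₀ (U k)) * Real.exp (CP * (s (k + 1) - s k)) ≤
          (E 0 u₀ + dist x₀ u₀) * Real.exp (CP * s (k + 1)) := by
        refine (mul_le_mul_of_nonneg_right ih (Real.exp_pos _).le).trans ?_
        rw [mul_assoc, ← Real.exp_add]
        ring_nf
        rfl
      simp only [Nat.succ_eq_add_one] at h4
      linarith
  have h0 := es_F_nonneg h hT u₀
  refine (es_two_exp h1 h (U k) (hd.mem k) hr).trans ?_
  have := (hd.mem k).2
  refine mul_le_mul_of_nonneg_right (key.trans ?_) (Real.exp_pos _).le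
  gcongr

lemma EsDisc.incr (hd : EsDisc E T u₀ s U) {a b : ℕ} (hab : a ≤ b) (M : ℝ)
    (hM : ∀ j, a ≤ j → j < b → E (s (j + 1)) (U j) - E (s j) (U j) ≤ M * (s (j + 1) - s j)) :
    (E (s b) (U b) + esVar U b) - (E (s a) (U a) + esVar U a) ≤ M * (s b - s a) := by
  induction b, hab using Nat.le_induction with
  | base => simp
  | succ n hn ih =>
    have h2 := ih fun j h1 h2 => hM j h1 (by omega)
    have h3 := hM n hn (by omega)
    have h4 := hd.min n (U n)
    rw [dist_self] at h4
    simp only [esVar, Finset.sum_range_succ] at h2 ⊢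
    linarith

lemma es_limit (hT : 0 < T) (h1 : CondE1 E T x₀) (h : CondE2 E P T x₀ CP) (h3 : CondE3 E P T)
    (hstab : EsStable E 0 u₀) :
    ∃ (u : ℝ → X) (W : ℝ → ℝ) (B : ℝ), u 0 = u₀ ∧ W 0 = 0 ∧ 0 ≤ B ∧
      (∀ t ∈ Icc 0 T, EsStable E t (u t)) ∧
      (∀ t ∈ Icc 0 T, ∀ r ∈ Icc 0 T, E r (u t) + dist x₀ (u t) ≤ B) ∧
      (∀ a b, 0 ≤ a → a ≤ b → b ≤ T → dist (u a) (u b) ≤ W b - W a) ∧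
      (∀ a b, 0 ≤ a → a ≤ b → b ≤ T →
        (E b (u b) + W b) - (E a (u a) + W a) ≤ CP * B * (b - a)) ∧
      (∀ t ∈ Icc 0 T, ContinuousWithinAt W (Icc 0 T) t → ∀ ε > 0, ∃ η > 0, ∀ t' ∈ Icc 0 T,
        t < t' → t' < t + η →
        (E t' (u t') + W t') - (E t (u t) + W t) ≤ (P t (u t) + ε) * (t' - t)) := by
  classical
  have h0T : (0 : ℝ) ∈ Icc 0 T := ⟨le_rfl, hT.le⟩
  set B := (E 0 u₀ + dist x₀ u₀) * Real.exp (CP * T) * Real.exp (CP * T) with hBdef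
  have hB0 : 0 ≤ B := by
    have := es_F_nonneg h h0T u₀
    positivity
  have hL0 : 0 ≤ CP * B := mul_nonneg h.1.le hB0
  -- the discrete solutions
  set τ : ℕ → ℝ := fun n => T / ((n : ℝ) + 1) with hτ
  have hτpos : ∀ n, 0 < τ n := fun n => by positivity
  have hτlim : Tendsto τ atTop (𝓝 0) := by
    have := (tendsto_one_div_add_atTop_nhds_zero_nat (𝕜 := ℝ)).const_mul T
    simpa [hτ, div_eq_mul_inv] using this
  set s : ℕ → ℕ → ℝ := fun n k => min ((k : ℝ) * τ n) T with hs
  have hsmem : ∀ n k, s n k ∈ Icc 0 T := fun n k =>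
    ⟨le_min (mul_nonneg (Nat.cast_nonneg k) (hτpos n).le) hT.le, min_le_right _ _⟩
  have hsmono : ∀ n, Monotone (s n) := fun n a b hab =>
    min_le_min_right _ (mul_le_mul_of_nonneg_right (Nat.cast_le.2 hab) (hτpos n).le)
  have hs0 : ∀ n, s n 0 = 0 := fun n => by simp [hs, hT.le]
  choose U hU using fun n => es_disc_exists h1 u₀ (s n) (hsmem n) (hsmono n) (hs0 n)
  set kk : ℕ → ℝ → ℕ := fun n t => ⌊t / τ n⌋₊ with hkk
  have hkmono : ∀ n, Monotone (kk n) := fun n a b hab =>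
    Nat.floor_le_floor (div_le_div_of_nonneg_right hab (hτpos n).le)
  have hk0 : ∀ n, kk n 0 = 0 := fun n => by simp [hkk]
  have hsk : ∀ n, ∀ t ∈ Icc 0 T, s n (kk n t) ≤ t ∧ t - τ n ≤ s n (kk n t) := by
    intro n t ht
    have h4 : (kk n t : ℝ) * τ n ≤ t := by
      rw [← le_div_iff₀ (hτpos n)]
      exact Nat.floor_le (div_nonneg ht.1 (hτpos n).le)
    have h5 : t < ((kk n t : ℝ) + 1) * τ n := by
      rw [← div_lt_iff₀ (hτpos n)]
      exact Nat.lt_floor_add_one _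
    have h6 : s n (kk n t) = (kk n t : ℝ) * τ n := min_eq_left (h4.trans ht.2)
    rw [h6]
    exact ⟨h4, by linarith⟩
  have hslim : ∀ t ∈ Icc 0 T, Tendsto (fun n => s n (kk n t)) atTop (𝓝 t) := by
    intro t ht
    refine tendsto_of_tendsto_of_tendsto_of_le_of_le (g := fun n => t - τ n) (h := fun _ => t) ?_
      tendsto_const_nhds (fun n => (hsk n t ht).2) (fun n => (hsk n t ht).1)
    simpa using tendsto_const_nhds.sub hτlim
  have hbd : ∀ n k, ∀ r ∈ Icc 0 T, E r (U n k) + dist x₀ (U n k) ≤ B := fun n k r hr =>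
    (hU n).bound h1 h k hr
  have hst : ∀ n k, EsStable E (s n k) (U n k) := fun n k => (hU n).stable hstab k
  have hincL : ∀ n a b, a ≤ b → (E (s n b) (U n b) + esVar (U n) b) -
      (E (s n a) (U n a) + esVar (U n) a) ≤ CP * B * (s n b - s n a) := by
    intro n a b hab
    refine (hU n).incr hab _ fun j _ _ => ?_
    have h4 := es_lip h1 h (U n j) (hbd n j) (hsmem n j) (hsmem n (j + 1))
    rw [abs_of_nonneg (sub_nonneg.2 (hsmono n (Nat.le_succ j)))] at h4
    exact (le_abs_self _).trans h4
  -- compactness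
  have hK := es_compact h1 h0T B
  obtain ⟨R, hR⟩ := hK.isBounded.subset_closedBall x₀
  have hWbd : ∀ n k, esVar (U n) k ∈ Icc 0 (E 0 u₀ + CP * B * T + R) := by
    intro n k
    refine ⟨Finset.sum_nonneg fun _ _ => dist_nonneg, ?_⟩
    have h4 := hincL n 0 k (Nat.zero_le k)
    have h5 : CP * B * (s n k - s n 0) ≤ CP * B * T :=
      mul_le_mul_of_nonneg_left (by rw [hs0]; linarith [(hsmem n k).2]) hL0
    have h6 := es_F_nonneg h (hsmem n k) (U n k)
    have h7 : dist (U n k) x₀ ≤ R := hR (hbd n k 0 h0T)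
    rw [dist_comm] at h7
    have h8 : esVar (U n) 0 = 0 := by simp [esVar]
    rw [h8, hs0 n, (hU n).start] at h4
    rw [hs0 n] at h5
    linarith
  set 𝒰 : Ultrafilter ℕ := hyperfilter ℕ with h𝒰
  have h𝒰le : (𝒰 : Filter ℕ) ≤ atTop := Nat.hyperfilter_le_atTop
  have hu : ∀ t : ℝ, ∃ x : X, Tendsto (fun n => U n (kk n t)) 𝒰 (𝓝 x) := by
    intro t
    obtain ⟨x, _, hx⟩ := hK.ultrafilter_le_nhds (𝒰.map fun n => U n (kk n t)) (by
      rw [le_principal_iff]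
      exact Filter.mem_map.2 (Filter.univ_mem' fun n => hbd n _ 0 h0T))
    exact ⟨x, hx⟩
  have hW : ∀ t : ℝ, ∃ x : ℝ, Tendsto (fun n => esVar (U n) (kk n t)) 𝒰 (𝓝 x) := by
    intro t
    obtain ⟨x, _, hx⟩ := (isCompact_Icc (a := (0 : ℝ)) (b := E 0 u₀ + CP * B * T + R)).ultrafilter_le_nhds
      (𝒰.map fun n => esVar (U n) (kk n t)) (by
      rw [le_principal_iff]
      exact Filter.mem_map.2 (Filter.univ_mem' fun n => hWbd n _))
    exact ⟨x, hx⟩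
  choose u hu using hu
  choose W hW using hW
  have hlim : ∀ t ∈ Icc 0 T, ∀ r ∈ Icc 0 T, E r (u t) + dist x₀ (u t) ≤ B := by
    intro t ht r hr
    have h4 := (es_compact h1 hr B).isClosed.mem_of_tendsto (hu t)
      (Eventually.of_forall fun n => hbd n _ r hr)
    exact h4
  have hstl : ∀ t ∈ Icc 0 T, _ := fun t ht =>
    es_stab_limit h1 h (l := (𝒰 : Filter ℕ)) (s := fun n => s n (kk n t))
      (w := fun n => U n (kk n t)) (B := B) (fun n => hsmem n _)
      (fun n => hbd n _ _ (hsmem n _)) (fun n => hst n _) ht ((hslim t ht).mono_left h𝒰le) (hu t)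
  have hHlim : ∀ t ∈ Icc 0 T, Tendsto (fun n => E (s n (kk n t)) (U n (kk n t)) +
      esVar (U n) (kk n t)) 𝒰 (𝓝 (E t (u t) + W t)) := fun t ht => (hstl t ht).2.2.add (hW t)
  have hlimle : ∀ M : ℝ, ∀ a ∈ Icc 0 T, ∀ b ∈ Icc 0 T,
      (∀ᶠ n in (𝒰 : Filter ℕ), (E (s n (kk n b)) (U n (kk n b)) + esVar (U n) (kk n b)) -
      (E (s n (kk n a)) (U n (kk n a)) + esVar (U n) (kk n a)) ≤
        M * (s n (kk n b) - s n (kk n a))) →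
      (E b (u b) + W b) - (E a (u a) + W a) ≤ M * (b - a) := by
    intro M a ha b hb hev
    exact le_of_tendsto_of_tendsto ((hHlim b hb).sub (hHlim a ha))
      ((((hslim b hb).sub (hslim a ha)).mono_left h𝒰le).const_mul M) hev
  refine ⟨u, W, B, ?_, ?_, hB0, fun t ht => (hstl t ht).2.1, hlim, ?_, ?_, ?_⟩
  · refine tendsto_nhds_unique (hu 0) ?_
    simp only [hk0, (hU _).start]
    exact tendsto_const_nhds
  · refine tendsto_nhds_unique (hW 0) ?_
    simp [hk0, esVar]
  · intro a b _ hab _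
    exact le_of_tendsto_of_tendsto ((hu a).dist (hu b)) ((hW b).sub (hW a))
      (Eventually.of_forall fun n => es_dist_le_var (U n) (hkmono n hab))
  · intro a b ha hab hb
    exact hlimle _ a ⟨ha, hab.trans hb⟩ b ⟨ha.trans hab, hb⟩
      (Eventually.of_forall fun n => hincL n _ _ (hkmono n hab))
  · intro t ht hcont ε hε
    obtain ⟨δ, hδ, hδP⟩ := es_usc h1 h h3 (B := B) (v := u t) ht hε
    obtain ⟨η, hη, hηW⟩ := Metric.continuousWithinAt_iff.1 hcont (δ / 2) (by positivity)
    refine ⟨min η δ, by positivity, fun t' ht' htt' ht'η => ?_⟩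
    have hd1 : t' < t + η := ht'η.trans_le (by linarith [min_le_left η δ])
    have hd2 : t' < t + δ := ht'η.trans_le (by linarith [min_le_right η δ])
    have hWd : W t' - W t < δ / 2 := by
      have := hηW ht' (by rw [Real.dist_eq, abs_of_pos (by linarith)]; linarith)
      rw [Real.dist_eq] at this
      exact (le_abs_self _).trans_lt this
    refine hlimle _ t ht t' ht' ?_
    have e1 : ∀ᶠ n in (𝒰 : Filter ℕ), dist (U n (kk n t)) (u t) < δ / 2 :=
      Metric.tendsto_nhds.1 (hu t) _ (by positivity)
    have e2 := (tendsto_order.1 ((hW t').sub (hW t))).2 _ hWd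
    have e3 := ((tendsto_order.1 (hslim t ht)).1 (t - δ) (by linarith)).filter_mono h𝒰le
    filter_upwards [e1, e2, e3] with n e1 e2 e3
    refine (hU n).incr (hkmono n htt'.le) _ fun j hj1 hj2 => ?_
    have g1 : s n (kk n t) ≤ s n j := hsmono n hj1
    have g2 : s n (j + 1) ≤ s n (kk n t') := hsmono n hj2
    have g3 : s n j ≤ s n (j + 1) := hsmono n (Nat.le_succ j)
    have g4 := (hsk n t' ht').1
    have g5 := es_dist_le_var (U n) hj1
    have g6 := es_var_mono (U n) hj2.le
    have g7 := dist_triangle_left (U n j) (u t) (U n (kk n t))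
    refine es_incr h1 h (U n j) (hsmem n j).1 g3 (hsmem n (j + 1)).2 _ fun r hr => ?_
    refine hδP (s n j) (hsmem n j) r ⟨(hsmem n j).1.trans hr.1, hr.2.le.trans (hsmem n (j + 1)).2⟩
      (U n j) (hbd n j) (hst n j) ?_ ?_ ?_
    · rw [abs_lt]; constructor <;> linarith
    · rw [abs_lt]; constructor <;> linarith [hr.1, hr.2]
    · linarith

lemma es_deriv_ge (h : CondE2 E P T x₀ CP) {u : ℝ → X} {G : ℝ → ℝ}
    (hG : ∀ a b, 0 ≤ a → a ≤ b → b ≤ T → E b (u b) - E a (u b) ≤ G b - G a) {t : ℝ}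
    (ht : t ∈ Ioo 0 T) (hd : DifferentiableAt ℝ G t) : P t (u t) ≤ deriv G t := by
  have h2 := (hasDerivAt_iff_tendsto_slope_left_right.1 hd.hasDerivAt).1
  refine le_of_forall_lt fun r hr => ?_
  obtain ⟨r', hr1, hr2⟩ := exists_between hr
  refine hr1.trans_le (ge_of_tendsto h2 ?_)
  have h3 := es_left h (t := t) ⟨ht.1.le, ht.2.le⟩ (u t) hr2
  have h4 : Ico 0 t ∈ 𝓝[<] t := by
    rw [← nhdsWithin_Ico_eq_nhdsLT ht.1]
    exact self_mem_nhdsWithin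
  rw [nhdsWithin_Ico_eq_nhdsLT ht.1] at h3
  filter_upwards [h3, h4] with z hz hz'
  have h5 := hG z t hz'.1 hz'.2.le ht.2.le
  rw [slope_comm, slope_def_field, le_div_iff₀ (by linarith [hz'.2])]
  linarith

lemma es_deriv_le {G : ℝ → ℝ} {p : ℝ} {t : ℝ} (ht : t ∈ Ioo 0 T)
    (hG : ∀ ε > 0, ∃ η > 0, ∀ t' ∈ Icc 0 T, t < t' → t' < t + η →
        G t' - G t ≤ (p + ε) * (t' - t)) (hd : DifferentiableAt ℝ G t) : deriv G t ≤ p := by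
  have h2 := (hasDerivAt_iff_tendsto_slope_left_right.1 hd.hasDerivAt).2
  refine le_of_forall_pos_le_add fun ε hε => le_of_tendsto h2 ?_
  obtain ⟨η, hη, hη'⟩ := hG ε hε
  have h4 : Ioo t (min (t + η) T) ∈ 𝓝[>] t :=
    Ioo_mem_nhdsGT (lt_min (by linarith) ht.2)
  filter_upwards [h4] with z hz
  have h6 := lt_min_iff.1 hz.2
  rw [slope_def_field, div_le_iff₀ (by linarith [hz.1])]
  exact hη' z ⟨ht.1.le.trans hz.1.le, h6.2.le⟩ hz.1 h6.1

lemma es_lipOn {G : ℝ → ℝ} {L : ℝ}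
    (hG : ∀ a b, 0 ≤ a → a ≤ b → b ≤ T → |G b - G a| ≤ L * (b - a)) :
    LipschitzOnWith (Real.toNNReal L) G (Icc 0 T) := by
  refine LipschitzOnWith.of_dist_le_mul fun x hx y hy => ?_
  have key : ∀ a b, 0 ≤ a → a ≤ b → b ≤ T → |G b - G a| ≤ (Real.toNNReal L) * |b - a| := by
    intro a b ha hab hb
    rw [abs_of_nonneg (sub_nonneg.2 hab)]
    exact (hG a b ha hab hb).trans
      (mul_le_mul_of_nonneg_right (Real.le_coe_toNNReal L) (sub_nonneg.2 hab))
  rw [Real.dist_eq, Real.dist_eq]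
  rcases le_total x y with hxy | hxy
  · rw [abs_sub_comm, abs_sub_comm x y]
    exact key x y hx.1 hxy hy.2
  · exact key y x hy.1 hxy hx.2

lemma es_ae_diff {G : ℝ → ℝ} {K : NNReal} (hG : LipschitzOnWith K G (Icc 0 T)) :
    ∀ᵐ t, t ∈ Ioo 0 T → DifferentiableAt ℝ G t := by
  filter_upwards [hG.ae_differentiableWithinAt_of_mem_real] with t ht htI
  exact (ht ⟨htI.1.le, htI.2.le⟩).differentiableAt (Icc_mem_nhds htI.1 htI.2)

lemma es_main (hT : 0 < T) (h1 : CondE1 E T x₀) (h : CondE2 E P T x₀ CP) (h3 : CondE3 E P T)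
    (hstab : EsStable E 0 u₀) : ∃ u : ℝ → X, u 0 = u₀ ∧ IsEnergeticSol E P T u := by
  obtain ⟨u, W, B, hu0, hW0, hB0, hst, hbd, hdW, hinc, hder⟩ := es_limit hT h1 h h3 hstab
  refine ⟨u, hu0, ?_⟩
  have hL0 : 0 ≤ CP * B := mul_nonneg h.1.le hB0
  have hWmono : MonotoneOn W (Icc 0 T) := fun a ha b hb hab => by
    have := hdW a b ha.1 hab hb.2
    linarith [dist_nonneg (x := u a) (y := u b)]
  -- variation
  have hvar : ∀ a b, 0 ≤ a → a ≤ b → b ≤ T →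
      eVariationOn u (Icc a b) ≤ ENNReal.ofReal (W b - W a) := by
    intro a b ha hab hb
    refine iSup_le fun p => ?_
    obtain ⟨n, p, hp, hpS⟩ := p
    show ∑ i ∈ Finset.range n, edist (u (p (i + 1))) (u (p i)) ≤ _
    have hmem : ∀ i, p i ∈ Icc 0 T := fun i => ⟨ha.trans (hpS i).1, (hpS i).2.trans hb⟩
    calc ∑ i ∈ Finset.range n, edist (u (p (i + 1))) (u (p i))
        ≤ ∑ i ∈ Finset.range n, ENNReal.ofReal (W (p (i + 1)) - W (p i)) := by
          refine Finset.sum_le_sum fun i _ => ?_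
          rw [edist_comm, edist_dist]
          exact ENNReal.ofReal_le_ofReal
            (hdW _ _ (hmem i).1 (hp (Nat.le_succ i)) (hmem (i + 1)).2)
      _ = ENNReal.ofReal (∑ i ∈ Finset.range n, (W (p (i + 1)) - W (p i))) := by
          rw [ENNReal.ofReal_sum_of_nonneg]
          exact fun i _ => sub_nonneg.2 (hWmono (hmem i) (hmem (i + 1)) (hp (Nat.le_succ i)))
      _ ≤ ENNReal.ofReal (W b - W a) := by
          refine ENNReal.ofReal_le_ofReal ?_
          rw [Finset.sum_range_sub (fun i => W (p i))]
          have h5 := hWmono (hmem n) ⟨ha.trans hab, hb⟩ (hpS n).2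
          have h6 := hWmono ⟨ha, hab.trans hb⟩ (hmem 0) (hpS 0).1
          linarith
  have hfin : ∀ a b, 0 ≤ a → a ≤ b → b ≤ T → eVariationOn u (Icc a b) ≠ ⊤ :=
    fun a b ha hab hb => ((hvar a b ha hab hb).trans_lt ENNReal.ofReal_lt_top).ne
  set V : ℝ → ℝ := fun t => (eVariationOn u (Icc 0 t)).toReal with hV
  have hVadd : ∀ a b, 0 ≤ a → a ≤ b → b ≤ T →
      V b - V a = (eVariationOn u (Icc a b)).toReal := by
    intro a b ha hab hb
    have h5 := eVariationOn.Icc_add_Icc u (s := univ) ha hab (mem_univ _)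
    simp only [univ_inter] at h5
    simp only [hV]
    rw [← h5, ENNReal.toReal_add (hfin 0 a le_rfl ha (hab.trans hb)) (hfin a b ha hab hb)]
    ring
  have hVW : ∀ a b, 0 ≤ a → a ≤ b → b ≤ T → V b - V a ≤ W b - W a := by
    intro a b ha hab hb
    rw [hVadd a b ha hab hb]
    refine ENNReal.toReal_le_of_le_ofReal ?_ (hvar a b ha hab hb)
    linarith [hWmono ⟨ha, hab.trans hb⟩ ⟨ha.trans hab, hb⟩ hab]
  have hVd : ∀ a b, 0 ≤ a → a ≤ b → b ≤ T → dist (u a) (u b) ≤ V b - V a := by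
    intro a b ha hab hb
    rw [hVadd a b ha hab hb, dist_edist]
    exact ENNReal.toReal_mono (hfin a b ha hab hb)
      (eVariationOn.edist_le u ⟨le_rfl, hab⟩ ⟨hab, le_rfl⟩)
  have hV0 : V 0 = 0 := by simp [hV]
  set H : ℝ → ℝ := fun t => E t (u t) + W t with hH
  set G : ℝ → ℝ := fun t => E t (u t) + V t with hG
  -- lower bounds
  have hlow : ∀ a b, 0 ≤ a → a ≤ b → b ≤ T → E b (u b) - E a (u b) ≤ G b - G a := by
    intro a b ha hab hb
    have h5 := hst a ⟨ha, hab.trans hb⟩ (u b)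
    have h6 := hVd a b ha hab hb
    simp only [hG]
    linarith
  have hGH : ∀ a b, 0 ≤ a → a ≤ b → b ≤ T → G b - G a ≤ H b - H a := by
    intro a b ha hab hb
    have h6 := hVW a b ha hab hb
    simp only [hG, hH]
    linarith
  have hlow' : ∀ a b, 0 ≤ a → a ≤ b → b ≤ T → E b (u b) - E a (u b) ≤ H b - H a :=
    fun a b ha hab hb => (hlow a b ha hab hb).trans (hGH a b ha hab hb)
  have hElow : ∀ a b, 0 ≤ a → a ≤ b → b ≤ T → -(CP * B * (b - a)) ≤ E b (u b) - E a (u b) := by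
    intro a b ha hab hb
    have h5 := es_lip h1 h (u b) (hbd b ⟨ha.trans hab, hb⟩) (a := a) (b := b)
      ⟨ha, hab.trans hb⟩ ⟨ha.trans hab, hb⟩
    rw [abs_of_nonneg (sub_nonneg.2 hab)] at h5
    exact (abs_le.1 h5).1
  have hHlip : LipschitzOnWith (Real.toNNReal (CP * B)) H (Icc 0 T) :=
    es_lipOn fun a b ha hab hb => abs_le.2
      ⟨(hElow a b ha hab hb).trans (hlow' a b ha hab hb), hinc a b ha hab hb⟩
  have hGlip : LipschitzOnWith (Real.toNNReal (CP * B)) G (Icc 0 T) :=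
    es_lipOn fun a b ha hab hb => abs_le.2
      ⟨(hElow a b ha hab hb).trans (hlow a b ha hab hb),
        (hGH a b ha hab hb).trans (hinc a b ha hab hb)⟩
  have hcont : ∀ᵐ t : ℝ, t ∈ Ioo 0 T → ContinuousWithinAt W (Icc 0 T) t := by
    filter_upwards [hWmono.countable_not_continuousWithinAt.ae_notMem volume] with t ht htI
    by_contra hc
    exact ht ⟨⟨htI.1.le, htI.2.le⟩, hc⟩
  have hHP : ∀ᵐ t : ℝ, t ∈ Ioo 0 T → deriv H t = P t (u t) := by
    filter_upwards [es_ae_diff hHlip, hcont] with t h5 h6 htI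
    refine le_antisymm ?_ (es_deriv_ge h hlow' htI (h5 htI))
    exact es_deriv_le htI (hder t ⟨htI.1.le, htI.2.le⟩ (h6 htI)) (h5 htI)
  have hGP : ∀ᵐ t : ℝ, t ∈ Ioo 0 T → P t (u t) ≤ deriv G t := by
    filter_upwards [es_ae_diff hGlip] with t h5 htI
    exact es_deriv_ge h hlow htI (h5 htI)
  have hneT : ∀ᵐ t : ℝ, t ≠ T := by
    simpa using (countable_singleton T).ae_notMem volume
  refine ⟨?_, fun t ht => ⟨hst t ht, ?_⟩⟩
  · rw [es_varD_eq]
    exact hfin 0 T le_rfl hT.le le_rfl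
  rw [es_varD_eq]
  have hsub : uIcc 0 t ⊆ Icc 0 T := by
    rw [uIcc_of_le ht.1]
    exact Icc_subset_Icc le_rfl ht.2
  have acH := (hHlip.mono hsub).absolutelyContinuousOnInterval
  have acG := (hGlip.mono hsub).absolutelyContinuousOnInterval
  have i1 := acH.integral_deriv_eq_sub
  have i2 := acG.integral_deriv_eq_sub
  have i3 : ∫ r in (0 : ℝ)..t, P r (u r) = ∫ r in (0 : ℝ)..t, deriv H r := by
    refine intervalIntegral.integral_congr_ae ?_
    filter_upwards [hHP, hneT] with r h5 h6 hr
    rw [uIoc_of_le ht.1] at hr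
    exact (h5 ⟨hr.1, lt_of_le_of_ne (hr.2.trans ht.2) h6⟩).symm
  have i4 : ∫ r in (0 : ℝ)..t, deriv H r ≤ ∫ r in (0 : ℝ)..t, deriv G r := by
    rw [intervalIntegral.integral_of_le ht.1, intervalIntegral.integral_of_le ht.1]
    refine setIntegral_mono_on_ae acH.intervalIntegrable_deriv.1 acG.intervalIntegrable_deriv.1
      measurableSet_Ioc ?_
    filter_upwards [hHP, hGP, hneT] with r h5 h7 h6 hr
    have hr' : r ∈ Ioo 0 T := ⟨hr.1, lt_of_le_of_ne (hr.2.trans ht.2) h6⟩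
    rw [h5 hr']
    exact h7 hr'
  have i5 := hGH 0 t le_rfl ht.1 ht.2
  have i6 : G 0 = E 0 (u 0) := by simp [hG, hV0]
  have i7 : G t = E t (u t) + (eVariationOn u (Icc 0 t)).toReal := rfl
  rw [← i7, i3]
  linarith
end Aux

theorem statement4
    {X : Type*} [MetricSpace X] [CompleteSpace X]
    (T : ℝ) (hT : 0 < T) (E P : ℝ → X → ℝ) (x₀ : X) (CP : ℝ)
    (hE1 : CondE1 E T x₀) (hE2 : CondE2 E P T x₀ CP)
    (hE3 : CondE3 E P T)
    (u₀ : X) (hstab : ∀ v : X, E 0 u₀ ≤ E 0 v + dist u₀ v) :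
    ∃ u : ℝ → X, u 0 = u₀ ∧ IsEnergeticSol E P T u := by
  exact es_main hT hE1 hE2 hE3 hstab

end
end

section
/- Let v : [a,b] → X be an absolutely continuous curve with metric derivative |v'| and let g : X → ℝ be positive and lower semicontinuous. Then ∫_a^b |v'|(s)·g(v(s)) ds = sup{ Σ_{i=1}^N d(v(σ_{i−1}),v(σ_i)) · inf_{σ∈[σ_{i−1},σ_i]} g(v(σ)) : a ≤ σ₀ < σ₁ < ... < σ_N ≤ b a finite partition } =: S (both sides possibly +∞). In particular, the map s ↦ |v'|(s)·g(v(s)) is integrable on [a,b] if and only if S < ∞. -/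
open Filter MeasureTheory Topology Set
open scoped ENNReal

noncomputable section

variable {X : Type*} [MetricSpace X]

/-- The supremum `S` of the Riemann-type sums appearing in Lemma A.1: over finite increasing
families of points of `[a,b]`, the sums of `d(v(σ_{i}),v(σ_{i+1})) · inf_{[σ_i,σ_{i+1}]} g∘v`. -/
def partSum {X : Type*} [MetricSpace X] (g : X → ℝ) (v : ℝ → X) (a b : ℝ) : ℝ≥0∞ :=
  ⨆ (N : ℕ) (σ : ℕ → ℝ)
    (_ : (∀ i, i ≤ N → σ i ∈ Icc a b) ∧ ∀ i, i < N → σ i < σ (i + 1)),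
    ∑ i ∈ Finset.range N,
      edist (v (σ i)) (v (σ (i + 1)))
        * ENNReal.ofReal (sInf (g '' (v '' Icc (σ i) (σ (i + 1)))))


/-- distance of a pair controlled by the primitive. -/
lemma aux_dist_le {X : Type*} [MetricSpace X] {u : ℝ → X} {M : ℝ → ℝ} (hM : Integrable M)
    (hu : ∀ s t : ℝ, s ≤ t → dist (u s) (u t) ≤ ∫ r in s..t, M r) (p q : ℝ) :
    dist (u p) (u q) ≤ dist (∫ r in (0 : ℝ)..p, M r) (∫ r in (0 : ℝ)..q, M r) := by
  have key : ∀ s t : ℝ, s ≤ t →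
      dist (u s) (u t) ≤ dist (∫ r in (0 : ℝ)..s, M r) (∫ r in (0 : ℝ)..t, M r) := by
    intro s t hst
    rw [dist_comm (∫ r in (0 : ℝ)..s, M r), Real.dist_eq,
      intervalIntegral.integral_interval_sub_left hM.intervalIntegrable hM.intervalIntegrable]
    exact (hu s t hst).trans (le_abs_self _)
  rcases le_total p q with h | h
  · exact key p q h
  · rw [dist_comm, dist_comm (∫ r in (0 : ℝ)..p, M r)]
    exact key q p h

lemma aux_ac {φ F : ℝ → ℝ} (h : ∀ p q, dist (φ p) (φ q) ≤ dist (F p) (F q)) {c d : ℝ}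
    (hF : AbsolutelyContinuousOnInterval F c d) : AbsolutelyContinuousOnInterval φ c d := by
  rw [absolutelyContinuousOnInterval_iff] at hF ⊢
  intro ε hε
  obtain ⟨δ, hδ, H⟩ := hF ε hε
  exact ⟨δ, hδ, fun E hE hs => (Finset.sum_le_sum fun i _ => h _ _).trans_lt (H E hE hs)⟩

lemma aux_ac_prim {M : ℝ → ℝ} (hM : Integrable M) (c d : ℝ) :
    AbsolutelyContinuousOnInterval (fun x => ∫ r in (0 : ℝ)..x, M r) c d := by
  have h2 := (hM.intervalIntegrable (a := min (min c d) 0) (b := max (max c d) 0)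
    ).absolutelyContinuousOnInterval_intervalIntegral (c := 0) (by
      rw [mem_uIcc]; left; exact ⟨min_le_right _ _, (le_max_right _ _)⟩)
  refine h2.mono ?_
  rw [uIcc, uIcc]
  apply Icc_subset_Icc
  · refine (min_le_left _ _).trans (min_le_left _ _)
  · refine le_trans ?_ (le_max_right _ _)
    exact le_max_left _ _

lemma aux_ae_diff {φ : ℝ → ℝ} (h : ∀ c d, AbsolutelyContinuousOnInterval φ c d) :
    ∀ᵐ x, DifferentiableAt ℝ φ x := by
  have : ∀ᵐ x, ∀ n : ℕ, x ∈ uIcc (-(n : ℝ)) n → DifferentiableAt ℝ φ x :=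
    ae_all_iff.2 fun n => (h _ _).ae_differentiableAt
  filter_upwards [this] with x hx
  obtain ⟨n, hn⟩ := exists_nat_ge |x|
  refine hx n ?_
  rw [mem_uIcc]; left; exact abs_le.1 hn

lemma aux_deriv_le {φ F : ℝ → ℝ} (h : ∀ p q, dist (φ p) (φ q) ≤ dist (F p) (F q)) {x c d : ℝ}
    (h1 : HasDerivAt φ c x) (h2 : HasDerivAt F d x) : ‖c‖ ≤ ‖d‖ := by
  refine le_of_tendsto_of_tendsto (hasDerivAt_iff_tendsto_slope.1 h1).norm
    (hasDerivAt_iff_tendsto_slope.1 h2).norm (Eventually.of_forall fun t => ?_)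
  simp only [slope_def_module, norm_smul]
  refine mul_le_mul_of_nonneg_left ?_ (norm_nonneg _)
  simpa [dist_eq_norm] using h t x

lemma aux_straddle {φ : ℝ → ℝ} {x c c' : ℝ} (h1 : HasDerivAt φ c x) (hc : c' < |c|) :
    ∃ δ > 0, ∀ p q, x - δ < p → p ≤ x → x ≤ q → q < x + δ →
      c' * (q - p) ≤ |φ q - φ p| := by
  rw [hasDerivAt_iff_isLittleO, Asymptotics.isLittleO_iff] at h1
  have h2 := h1 (sub_pos.2 hc)
  rw [Metric.eventually_nhds_iff] at h2
  obtain ⟨δ, hδ, H⟩ := h2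
  refine ⟨δ, hδ, fun p q hp1 hp2 hq1 hq2 => ?_⟩
  have hp := @H p (by rw [Real.dist_eq, abs_lt]; constructor <;> linarith)
  have hq := @H q (by rw [Real.dist_eq, abs_lt]; constructor <;> linarith)
  simp only [Real.norm_eq_abs, smul_eq_mul] at hp hq
  rw [abs_of_nonpos (by linarith : p - x ≤ 0)] at hp
  rw [abs_of_nonneg (by linarith : 0 ≤ q - x)] at hq
  have e : (q - p) * |c| = |(q - p) * c| := by
    rw [abs_mul, abs_of_nonneg (by linarith : 0 ≤ q - p)]
  have e2 : (q - p) * c = (φ q - φ p) - (φ q - φ x - (q - x) * c) + (φ p - φ x - (p - x) * c) := by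
    ring
  have e3 := abs_add_le ((φ q - φ p) - (φ q - φ x - (q - x) * c)) (φ p - φ x - (p - x) * c)
  have e4 := abs_sub (φ q - φ p) (φ q - φ x - (q - x) * c)
  rw [← e2, ← e] at e3
  nlinarith

/-- Core facts on the metric derivative. -/
lemma aux_core {X : Type*} [MetricSpace X] {u : ℝ → X} {M : ℝ → ℝ} (hM : Integrable M)
    (hu : ∀ s t : ℝ, s ≤ t → dist (u s) (u t) ≤ ∫ r in s..t, M r) :
    Continuous u ∧ ∃ w : ℝ → ℝ≥0∞, Measurable w ∧
      (∀ s t, s ≤ t → edist (u s) (u t) ≤ ∫⁻ r in Ioc s t, w r) ∧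
      (∀ᵐ s, w s ≠ ⊤ ∧ mder u s = (w s).toReal) ∧
      (∀ᵐ s, ∀ c < w s, ∃ δ > 0, ∀ p q, s - δ < p → p ≤ s → s ≤ q → q < s + δ →
        c * ENNReal.ofReal (q - p) ≤ edist (u p) (u q)) := by
  set F : ℝ → ℝ := fun x => ∫ r in (0 : ℝ)..x, M r with hF
  have hd : ∀ p q, dist (u p) (u q) ≤ dist (F p) (F q) := aux_dist_le hM hu
  have hFc : Continuous F := intervalIntegral.continuous_primitive
    (fun _ _ => hM.intervalIntegrable) 0
  have huc : Continuous u := by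
    rw [continuous_iff_continuousAt]
    intro x
    rw [ContinuousAt, tendsto_iff_dist_tendsto_zero]
    exact squeeze_zero (fun _ => dist_nonneg) (fun t => hd t x)
      (tendsto_iff_dist_tendsto_zero.1 hFc.continuousAt)
  refine ⟨huc, ?_⟩
  let φ : ℕ → ℝ → ℝ := fun k t => dist (u t) (u (TopologicalSpace.denseSeq ℝ k))
  have hφu : ∀ k p q, dist (φ k p) (φ k q) ≤ dist (u p) (u q) := fun k p q =>
    dist_dist_dist_le_left _ _ _
  have hφ : ∀ k p q, dist (φ k p) (φ k q) ≤ dist (F p) (F q) := fun k p q =>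
    (hφu k p q).trans (hd p q)
  have hac : ∀ k c d, AbsolutelyContinuousOnInterval (φ k) c d := fun k c d =>
    aux_ac (hφ k) (aux_ac_prim hM c d)
  let w : ℝ → ℝ≥0∞ := fun s => ⨆ k, ‖deriv (φ k) s‖ₑ
  have hwm : Measurable w := Measurable.iSup fun k => (measurable_deriv (φ k)).enorm
  have hdiff : ∀ᵐ x, ∀ k, DifferentiableAt ℝ (φ k) x :=
    ae_all_iff.2 fun k => aux_ae_diff (hac k)
  have hFd := _root_.LocallyIntegrable.ae_hasDerivAt_integral hM.locallyIntegrable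
  have hwM : ∀ᵐ x, w x ≤ ‖M x‖ₑ := by
    filter_upwards [hdiff, hFd] with x h1 h2
    refine iSup_le fun k => ?_
    have := aux_deriv_le (hφ k) (h1 k).hasDerivAt (h2 0)
    exact enorm_le_iff_norm_le.2 this
  have hwfin : ∀ᵐ x, w x ≠ ⊤ := by
    filter_upwards [hwM] with x hx
    exact ne_top_of_le_ne_top enorm_ne_top hx
  have hA : ∀ s t, s ≤ t → edist (u s) (u t) ≤ ∫⁻ r in Ioc s t, w r := by
    intro s t hst
    have h1 : ∀ k, edist (φ k s) (φ k t) ≤ ∫⁻ r in Ioc s t, w r := by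
      intro k
      rw [edist_comm, edist_eq_enorm_sub, ← (hac k s t).integral_deriv_eq_sub,
        intervalIntegral.integral_of_le hst]
      exact (enorm_integral_le_lintegral_enorm _).trans
        (lintegral_mono fun r => le_iSup (fun k => ‖deriv (φ k) r‖ₑ) k)
    have h2 : ∀ z, edist (dist (u s) (u z)) (dist (u t) (u z)) ≤ ∫⁻ r in Ioc s t, w r := by
      intro z
      have hcl : IsClosed {z | edist (dist (u s) (u z)) (dist (u t) (u z))
          ≤ ∫⁻ r in Ioc s t, w r} := isClosed_le (by fun_prop) continuous_const
      have hsub : range (TopologicalSpace.denseSeq ℝ) ⊆ {z | edist (dist (u s) (u z))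
          (dist (u t) (u z)) ≤ ∫⁻ r in Ioc s t, w r} := by
        rintro _ ⟨k, rfl⟩; exact h1 k
      have := hcl.closure_subset_iff.2 hsub
      exact this (TopologicalSpace.denseRange_denseSeq ℝ z)
    have h3 := h2 t
    rwa [dist_self, edist_dist, dist_zero_right, Real.norm_eq_abs, abs_dist, ← edist_dist] at h3
  refine ⟨w, hwm, hA, ?_, ?_⟩
  · have hwi : Integrable (fun r => (w r).toReal) := by
      refine Integrable.mono hM hwm.ennreal_toReal.aestronglyMeasurable ?_
      filter_upwards [hwM] with x hx
      rw [Real.norm_eq_abs, abs_of_nonneg ENNReal.toReal_nonneg, ← toReal_enorm]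
      exact ENNReal.toReal_mono enorm_ne_top hx
    have hu2 : ∀ s t : ℝ, s ≤ t → dist (u s) (u t) ≤ ∫ r in s..t, (w r).toReal := by
      intro s t hst
      have h1 := hA s t hst
      have e : ∫⁻ r in Ioc s t, w r = ENNReal.ofReal (∫ r in s..t, (w r).toReal) := by
        rw [intervalIntegral.integral_of_le hst,
          ofReal_integral_eq_lintegral_ofReal hwi.integrableOn
            (Eventually.of_forall fun _ => ENNReal.toReal_nonneg)]
        refine lintegral_congr_ae ?_
        filter_upwards [ae_restrict_of_ae hwfin] with x hx
        rw [ENNReal.ofReal_toReal hx]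
      rw [e, edist_dist] at h1
      refine (ENNReal.ofReal_le_ofReal_iff ?_).1 h1
      exact intervalIntegral.integral_nonneg hst fun _ _ => ENNReal.toReal_nonneg
    have hd2 := aux_dist_le hwi hu2
    filter_upwards [hwfin, hdiff, _root_.LocallyIntegrable.ae_hasDerivAt_integral hwi.locallyIntegrable] with x h1 h2 h3
    refine ⟨h1, Tendsto.limUnder_eq ?_⟩
    have hquot : ∀ (ψ : ℝ → ℝ) (t : ℝ), ‖slope ψ x t‖ = dist (ψ t) (ψ x) / |t - x| := by
      intro ψ t
      rw [slope_def_field, norm_div, dist_eq_norm, Real.norm_eq_abs (t - x)]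
    rw [tendsto_order]
    constructor
    · intro c hc
      rcases lt_or_ge c 0 with hc0 | hc0
      · exact Eventually.of_forall fun t => hc0.trans_le (by positivity)
      have : ENNReal.ofReal c < w x := (ENNReal.ofReal_lt_iff_lt_toReal hc0 h1).2 hc
      obtain ⟨k, hk⟩ := lt_iSup_iff.1 this
      have hk' : c < ‖deriv (φ k) x‖ := by
        rwa [← ofReal_norm, ENNReal.ofReal_lt_ofReal_iff_of_nonneg hc0] at hk
      have := (hasDerivAt_iff_tendsto_slope.1 (h2 k).hasDerivAt).norm
      filter_upwards [this.eventually (lt_mem_nhds hk')] with t ht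
      rw [hquot] at ht
      refine ht.trans_le ?_
      gcongr
      exact hφu k t x
    · intro c hc
      have := (hasDerivAt_iff_tendsto_slope.1 (h3 0)).norm
      rw [Real.norm_eq_abs, abs_of_nonneg ENNReal.toReal_nonneg] at this
      filter_upwards [this.eventually (gt_mem_nhds hc)] with t ht
      rw [hquot] at ht
      refine lt_of_le_of_lt ?_ ht
      gcongr
      exact hd2 t x
  · filter_upwards [hdiff] with x h2 c hc
    obtain ⟨k, hk⟩ := lt_iSup_iff.1 hc
    have hcf : c ≠ ⊤ := ne_top_of_lt hk
    have hk' : c.toReal < |deriv (φ k) x| := by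
      rw [← Real.norm_eq_abs, ← toReal_enorm]
      exact (ENNReal.toReal_lt_toReal hcf enorm_ne_top).2 hk
    obtain ⟨δ, hδ, H⟩ := aux_straddle (h2 k).hasDerivAt hk'
    refine ⟨δ, hδ, fun p q a1 a2 a3 a4 => ?_⟩
    have := H p q a1 a2 a3 a4
    rw [← ENNReal.ofReal_toReal hcf, ← ENNReal.ofReal_mul ENNReal.toReal_nonneg, edist_dist]
    refine ENNReal.ofReal_le_ofReal (this.trans ?_)
    rw [← Real.dist_eq, dist_comm]
    exact hφu k p q

lemma aux_partSum_congr {X : Type*} [MetricSpace X] (g : X → ℝ) {u v : ℝ → X} {a b : ℝ}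
    (h : EqOn u v (Icc a b)) : partSum g u a b = partSum g v a b := by
  unfold partSum
  refine iSup_congr fun N => iSup_congr fun σ => iSup_congr fun hσ => ?_
  refine Finset.sum_congr rfl fun i hi => ?_
  have hi' : i < N := Finset.mem_range.1 hi
  have h1 := hσ.1 i hi'.le
  have h2 := hσ.1 (i + 1) hi'
  rw [h h1, h h2, image_congr (h.mono (Icc_subset_Icc h1.1 h2.2))]

/-- upper bound of every sum -/
lemma aux_partSum_le {X : Type*} [MetricSpace X] {u : ℝ → X} {w : ℝ → ℝ≥0∞}
    (hA : ∀ s t, s ≤ t → edist (u s) (u t) ≤ ∫⁻ r in Ioc s t, w r) (hw : Measurable w)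
    (g : X → ℝ) (hg : ∀ x, 0 < g x) (a b : ℝ) :
    partSum g u a b ≤ ∫⁻ s in Ioc a b, w s * ENNReal.ofReal (g (u s)) := by
  unfold partSum
  refine iSup_le fun N => iSup_le fun σ => iSup_le fun ⟨h1, h2⟩ => ?_
  have key : ∀ n, n ≤ N → ∑ i ∈ Finset.range n, edist (u (σ i)) (u (σ (i + 1)))
        * ENNReal.ofReal (sInf (g '' (u '' Icc (σ i) (σ (i + 1)))))
        ≤ ∫⁻ s in Ioc a (σ n), w s * ENNReal.ofReal (g (u s)) := by
    intro n
    induction n with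
    | zero => intro _; simp
    | succ n ih =>
      intro hn
      rw [Finset.sum_range_succ]
      have hlt := h2 n hn
      have hna := (h1 n (by lia)).1
      rw [← Ioc_union_Ioc_eq_Ioc hna hlt.le,
        lintegral_union measurableSet_Ioc (Ioc_disjoint_Ioc_of_le le_rfl)]
      refine add_le_add (ih (by lia)) ?_
      refine (mul_le_mul_left (hA _ _ hlt.le) _).trans ?_
      rw [← lintegral_mul_const _ hw]
      refine setLIntegral_mono' measurableSet_Ioc fun x hx => ?_
      gcongr
      refine csInf_le ⟨0, ?_⟩ ⟨u x, ⟨x, Ioc_subset_Icc_self hx, rfl⟩, rfl⟩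
      rintro _ ⟨y, _, rfl⟩
      exact (hg y).le
  refine (key N le_rfl).trans (lintegral_mono_set (Ioc_subset_Ioc_right (h1 N le_rfl).2))

/-- lower bound by Fatou -/
lemma aux_le_partSum {X : Type*} [MetricSpace X] {u : ℝ → X} (huc : Continuous u)
    {w : ℝ → ℝ≥0∞}
    (hB : ∀ᵐ s, ∀ c < w s, ∃ δ > 0, ∀ p q, s - δ < p → p ≤ s → s ≤ q → q < s + δ →
        c * ENNReal.ofReal (q - p) ≤ edist (u p) (u q))
    (g : X → ℝ) (hglsc : LowerSemicontinuous g) (a b : ℝ) (hab : a < b) :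
    ∫⁻ s in Ioc a b, w s * ENNReal.ofReal (g (u s)) ≤ partSum g u a b := by
  let h : ℕ → ℝ := fun n => (b - a) / (n + 1)
  have hpos : ∀ n, 0 < h n := fun n => div_pos (sub_pos.2 hab) (by positivity)
  have hlim : Tendsto h atTop (𝓝 0) := by
    have := (tendsto_one_div_add_atTop_nhds_zero_nat (𝕜 := ℝ)).const_mul (b - a)
    simpa [h, div_eq_mul_inv] using this
  have hnh : ∀ n : ℕ, ((n : ℝ) + 1) * h n = b - a := by
    intro n; simp only [h]; field_simp
  let σ : ℕ → ℕ → ℝ := fun n i => a + i * h n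
  have hσs : ∀ n i, σ n (i + 1) - σ n i = h n := by intro n i; simp only [σ]; push_cast; ring
  have hσm : ∀ n i, σ n i < σ n (i + 1) := fun n i => by
    have := hσs n i; have := hpos n; linarith
  let C : ℕ → ℕ → ℝ≥0∞ := fun n i => edist (u (σ n i)) (u (σ n (i + 1)))
        * ENNReal.ofReal (sInf (g '' (u '' Icc (σ n i) (σ n (i + 1)))))
  let f : ℕ → ℝ → ℝ≥0∞ := fun n s => ∑ i ∈ Finset.range (n + 1),
    (Ioc (σ n i) (σ n (i + 1))).indicator (fun _ => C n i / ENNReal.ofReal (h n)) s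
  have hfm : ∀ n, Measurable (f n) := fun n =>
    Finset.measurable_sum _ fun i _ => measurable_const.indicator measurableSet_Ioc
  have hfi : ∀ n, ∫⁻ s in Ioc a b, f n s ≤ partSum g u a b := by
    intro n
    refine (setLIntegral_le_lintegral _ _).trans ?_
    rw [lintegral_finsetSum _ fun i _ => measurable_const.indicator measurableSet_Ioc]
    have : ∀ i, ∫⁻ s, (Ioc (σ n i) (σ n (i + 1))).indicator
        (fun _ => C n i / ENNReal.ofReal (h n)) s = C n i := by
      intro i
      rw [lintegral_indicator_const measurableSet_Ioc, Real.volume_Ioc, hσs,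
        ENNReal.div_mul_cancel (by simpa using hpos n) ENNReal.ofReal_ne_top]
    simp only [this]
    unfold partSum
    refine le_iSup_of_le (n + 1) (le_iSup_of_le (σ n) (le_iSup_of_le ⟨?_, fun i _ => hσm n i⟩ ?_))
    · intro i hi
      have hi' : (i : ℝ) ≤ n + 1 := by exact_mod_cast hi
      constructor
      · simp only [σ]; have := mul_nonneg (Nat.cast_nonneg (α := ℝ) i) (hpos n).le; linarith
      · simp only [σ]
        have := mul_le_mul_of_nonneg_right hi' (hpos n).le
        rw [hnh] at this; linarith
    · exact le_rfl
  have hpt : ∀ᵐ s ∂(volume.restrict (Ioc a b)),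
      w s * ENNReal.ofReal (g (u s)) ≤ liminf (fun n => f n s) atTop := by
    filter_upwards [ae_restrict_of_ae hB, ae_restrict_mem measurableSet_Ioc] with s hs hsab
    refine ENNReal.mul_le_of_forall_lt fun c hc e he => ?_
    obtain ⟨δ, hδ, H⟩ := hs c hc
    have hef : e ≠ ⊤ := ne_top_of_lt he
    have he' : e.toReal < g (u s) := by
      have := (ENNReal.toReal_lt_toReal hef ENNReal.ofReal_ne_top).2 he
      rcases le_or_gt (g (u s)) 0 with h0 | h0
      · rw [ENNReal.ofReal_of_nonpos h0] at he; simp at he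
      · rwa [ENNReal.toReal_ofReal h0.le] at this
    have hnb : ∀ᶠ t in 𝓝 s, e.toReal < g (u t) :=
      huc.continuousAt.eventually (hglsc (u s) _ he')
    obtain ⟨η, hη, Hη⟩ := Metric.eventually_nhds_iff.1 hnb
    refine le_liminf_of_le (by isBoundedDefault) ?_
    filter_upwards [hlim.eventually (gt_mem_nhds (lt_min hδ hη))] with n hn
    have hn1 := hn.trans_le (min_le_left _ _)
    have hn2 := hn.trans_le (min_le_right _ _)
    -- the cell containing `s`
    obtain ⟨i, hin, hi⟩ : ∃ i, i < n + 1 ∧ s ∈ Ioc (σ n i) (σ n (i + 1)) := by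
      have hx0 : 0 < (s - a) / h n := div_pos (sub_pos.2 hsab.1) (hpos n)
      have hxe : (s - a) / h n * h n = s - a := div_mul_cancel₀ _ (hpos n).ne'
      have hc1 : ⌈(s - a) / h n⌉₊ ≠ 0 := (Nat.ceil_pos.2 hx0).ne'
      obtain ⟨i, hi⟩ := Nat.exists_eq_succ_of_ne_zero hc1
      refine ⟨i, ?_, ?_, ?_⟩
      · have : ⌈(s - a) / h n⌉₊ ≤ n + 1 := by
          rw [Nat.ceil_le, div_le_iff₀ (hpos n)]
          push_cast
          rw [hnh]; linarith [hsab.2]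
        lia
      · have : (i : ℝ) < (s - a) / h n := Nat.lt_ceil.1 (by lia)
        rw [lt_div_iff₀ (hpos n)] at this
        simp only [σ]; linarith
      · have : (s - a) / h n ≤ ((i + 1 : ℕ) : ℝ) := Nat.ceil_le.1 hi.le
        rw [div_le_iff₀ (hpos n)] at this
        simp only [σ]; linarith
    have hle : C n i / ENNReal.ofReal (h n) ≤ f n s := by
      have := Finset.single_le_sum (f := fun i => (Ioc (σ n i) (σ n (i + 1))).indicator
        (fun _ => C n i / ENNReal.ofReal (h n)) s) (fun _ _ => zero_le)
        (Finset.mem_range.2 hin)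
      simpa only [indicator_of_mem hi] using this
    refine le_trans ?_ hle
    have hss := hσs n i
    have k1 := H (σ n i) (σ n (i + 1)) (by linarith [hi.1, hi.2]) hi.1.le hi.2
      (by linarith [hi.1, hi.2])
    rw [hss] at k1
    have k2 : e ≤ ENNReal.ofReal (sInf (g '' (u '' Icc (σ n i) (σ n (i + 1))))) := by
      rw [← ENNReal.ofReal_toReal hef]
      apply ENNReal.ofReal_le_ofReal
      refine le_csInf (((nonempty_Icc.2 (hσm n i).le).image _).image _) ?_
      rintro _ ⟨_, ⟨t, ht, rfl⟩, rfl⟩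
      refine (Hη ?_).le
      rw [Real.dist_eq, abs_lt]
      constructor <;> linarith [ht.1, ht.2, hi.1, hi.2]
    rw [ENNReal.le_div_iff_mul_le (Or.inl (by simpa using hpos n)) (Or.inl ENNReal.ofReal_ne_top)]
    calc c * e * ENNReal.ofReal (h n) = (c * ENNReal.ofReal (h n)) * e := by ring
      _ ≤ _ := mul_le_mul' k1 k2
  calc ∫⁻ s in Ioc a b, w s * ENNReal.ofReal (g (u s))
      ≤ ∫⁻ s in Ioc a b, liminf (fun n => f n s) atTop := lintegral_mono_ae hpt
    _ ≤ liminf (fun n => ∫⁻ s in Ioc a b, f n s) atTop := lintegral_liminf_le hfm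
    _ ≤ partSum g u a b := by
        refine liminf_le_of_le (by isBoundedDefault) fun x hx => ?_
        obtain ⟨n, hn⟩ := hx.exists
        exact hn.trans (hfi n)

/-- constant extension of an absolutely continuous curve -/
lemma aux_extend {X : Type*} [MetricSpace X] {a b : ℝ} (hab : a ≤ b) {v : ℝ → X}
    (hv : IsAC v a b) : ∃ (u : ℝ → X) (M : ℝ → ℝ), Integrable M ∧ EqOn u v (Icc a b) ∧
      ∀ s t : ℝ, s ≤ t → dist (u s) (u t) ≤ ∫ r in s..t, M r := by
  obtain ⟨m, hm, H⟩ := hv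
  have hi : Integrable ((Icc a b).indicator fun r => |m r|) :=
    (integrable_indicator_iff measurableSet_Icc).2 hm.abs
  refine ⟨fun t => v (max a (min b t)), (Icc a b).indicator fun r => |m r|, hi, ?_, ?_⟩
  · intro t ht
    simp only [min_eq_right ht.2, max_eq_right ht.1]
  · intro s t hst
    have c1 : a ≤ max a (min b s) := le_max_left _ _
    have c2 : max a (min b s) ≤ max a (min b t) := max_le_max_left _ (min_le_min_left _ hst)
    have c3 : max a (min b t) ≤ b := max_le hab (min_le_left _ _)
    refine (H _ _ c1 c2 c3).trans ?_
    rw [intervalIntegral.integral_of_le c2, intervalIntegral.integral_of_le hst]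
    have s1 : Ioc (max a (min b s)) (max a (min b t)) ⊆ Icc a b := fun x hx =>
      ⟨c1.trans hx.1.le, hx.2.trans c3⟩
    have s2 : Ioc (max a (min b s)) (max a (min b t)) ⊆ Ioc s t := by
      intro x hx
      have := s1 hx
      simp only [mem_Ioc, mem_Icc] at hx this ⊢
      grind
    calc ∫ r in Ioc (max a (min b s)) (max a (min b t)), m r
        ≤ ∫ r in Ioc (max a (min b s)) (max a (min b t)), (Icc a b).indicator (fun r => |m r|) r := by
          refine setIntegral_mono_on (hm.mono_set s1) hi.integrableOn measurableSet_Ioc ?_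
          intro x hx
          rw [indicator_of_mem (s1 hx)]
          exact le_abs_self _
      _ ≤ _ := by
          refine setIntegral_mono_set hi.integrableOn ?_ s2.eventuallyLE
          exact Eventually.of_forall fun x => indicator_nonneg (fun _ _ => abs_nonneg _) x

theorem statement13
    {X : Type*} [MetricSpace X] [CompleteSpace X]
    (a b : ℝ) (hab : a ≤ b) (v : ℝ → X) (hv : IsAC v a b)
    (g : X → ℝ) (hgpos : ∀ x : X, 0 < g x) (hglsc : LowerSemicontinuous g) :
    (∫⁻ s in Ioc a b, ENNReal.ofReal (mder v s) * ENNReal.ofReal (g (v s)))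
        = partSum g v a b ∧
      (IntegrableOn (fun s => mder v s * g (v s)) (Icc a b) ↔ partSum g v a b ≠ ⊤) := by
  obtain ⟨u, M, hM, huv, hu⟩ := aux_extend hab hv
  obtain ⟨huc, w, hwm, hA, hB, hC⟩ := aux_core hM hu
  -- almost everywhere identification
  have hmd : ∀ᵐ s ∂(volume.restrict (Ioc a b)),
      w s ≠ ⊤ ∧ mder v s = (w s).toReal ∧ v s = u s := by
    have hne : ∀ᵐ s : ℝ, s ≠ b := by simp [ae_iff, measure_singleton]
    filter_upwards [ae_restrict_of_ae hB, ae_restrict_mem measurableSet_Ioc,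
      ae_restrict_of_ae hne] with s hs hsab hsb
    have hsb' : s < b := lt_of_le_of_ne hsab.2 hsb
    have hvs : v s = u s := (huv (Ioc_subset_Icc_self hsab)).symm
    refine ⟨hs.1, ?_, hvs⟩
    rw [← hs.2]
    unfold mder limUnder
    congr 1
    refine Filter.map_congr ?_
    filter_upwards [mem_nhdsWithin_of_mem_nhds (Ioo_mem_nhds hsab.1 hsb')] with t ht
    rw [hvs, huv (Ioo_subset_Icc_self ht)]
  have hint : (∫⁻ s in Ioc a b, ENNReal.ofReal (mder v s) * ENNReal.ofReal (g (v s)))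
      = ∫⁻ s in Ioc a b, w s * ENNReal.ofReal (g (u s)) := by
    refine lintegral_congr_ae ?_
    filter_upwards [hmd] with s hs
    rw [hs.2.1, hs.2.2, ENNReal.ofReal_toReal hs.1]
  have hmain : (∫⁻ s in Ioc a b, ENNReal.ofReal (mder v s) * ENNReal.ofReal (g (v s)))
      = partSum g v a b := by
    rw [hint, ← aux_partSum_congr g huv]
    refine le_antisymm ?_ (aux_partSum_le hA hwm g hgpos a b)
    rcases hab.eq_or_lt with h | h
    · simp [h]
    · exact aux_le_partSum huc hC g hglsc a b h
  refine ⟨hmain, ?_⟩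
  have hgm : Measurable fun s => g (u s) :=
    LowerSemicontinuous.measurable (fun s y hy => huc.continuousAt.eventually (hglsc (u s) y hy))
  have hmeas : AEStronglyMeasurable (fun s => mder v s * g (v s)) (volume.restrict (Ioc a b)) := by
    refine (hwm.ennreal_toReal.mul hgm).aestronglyMeasurable.congr ?_
    filter_upwards [hmd] with s hs
    simp only [Pi.mul_apply]
    rw [hs.2.1, hs.2.2]
  rw [integrableOn_Icc_iff_integrableOn_Ioc, IntegrableOn, Integrable,
    and_iff_right hmeas, hasFiniteIntegral_iff_enorm, ← hmain, lt_top_iff_ne_top]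
  have he : (∫⁻ s in Ioc a b, ‖mder v s * g (v s)‖ₑ)
      = ∫⁻ s in Ioc a b, ENNReal.ofReal (mder v s) * ENNReal.ofReal (g (v s)) := by
    refine lintegral_congr_ae ?_
    filter_upwards [hmd] with s hs
    have h0 : 0 ≤ mder v s := by rw [hs.2.1]; exact ENNReal.toReal_nonneg
    rw [← ENNReal.ofReal_mul h0, Real.enorm_of_nonneg (mul_nonneg h0 (hgpos _).le)]
  rw [he]

end
end
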